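/- arXiv:2205.15216 — 2 statements merged into one kernel-verified Lean document; each statement's English description precedes it below -/
import Mathlib

section
/- Let 1/2 < t < 1 and put δ := 1 - t. Suppose there exist positive real constants c₁, c₂, d₁, d₂, c_{λ,ν}, l, K, positive-valued functions ν₁, ν₂, λ₁, λ₂ : ℕ → ℝ_{>0}, positive real numbers ξ₁, ξ₂, η₁, η₂ (the values at t of positive functions on (1/2,1)), positive integers M, N₁, N₀ with N₁ < N₀, and a smooth (C^∞) increasing function f : ℝ_{≥1} → ℝ_{>0} such that for all integers n₀ ≥ N₀ and n₁ ≥ N₁ the following ten conditions hold: (1) f(n₀) ≥ K·f((1+l)·n₀) and K ≥ (2/3)^{1/2}; (2) c₁·ξ₁·ν₁(n₁)/f(n₁)^{t+δt} ≤ ∑_{n=1}^{n₁-1} f(n)^{-(t+δt)} ≤ c₂·ξ₂·ν₂(n₁)/f(n₁)^{t+δt}; (3) d₁·η₁·λ₁(n₁)/f(n₁)^{2t} ≤ ∑_{n=n₁}^{∞} f(n)^{-2t} ≤ d₂·η₂·λ₂(n₁)/f(n₁)^{2t} (in particular the series converges); (4) λ₁(n₀) ≥ c_{λ,ν}·ν₂(n₀);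 (5) λ₂(n₀) ≤ d₂^{-1}·η₂^{-1}·f(n₀)^{2t}; (6) M ≥ max{ 4^{1/(1-t)}·(c₂ξ₂/(c_{λ,ν}d₁η₁))^{2/(t(1-t))}, (50/K^{t(2-t)})^{2/(1-t)} }; (7) max_{x∈[n₀, n₀+9M²]} f'(x) ≤ (1/4752)·M^{-4}·f(n₀); (8) f(n₀+9M²) ≤ (264M²)^{1/t}·f(n₀); (9) 9M·f(n₀)^t ≤ l·n₀; (10) ν₁(n₀)·λ₂(n₀)^{-(1+δ)/2} ≥ ((d₂η₂)^{(1+δ)/2}/(c₁ξ₁))·M^{1-δ/2}. Then for every integer n₀ ≥ N₀, the squares of sidelength f(n)^{-t} for n ≥ n₀ can be packed perfectly into a square of area ∑_{n=n₀}^{∞} f(n)^{-2t}. -/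
open Set MeasureTheory

/-- The axis-parallel square with lower-left corner `c` and sidelength `s`. -/
noncomputable def square (c : ℝ × ℝ) (s : ℝ) : Set (ℝ × ℝ) :=
  Set.Icc c.1 (c.1 + s) ×ˢ Set.Icc c.2 (c.2 + s)

/-- The family of sets `S i` is packed perfectly into `Ω`: the sets are contained in `Ω`,
have pairwise disjoint interiors, and cover `Ω` up to a Lebesgue-null set. -/
def PerfectlyPacked {ι : Type*} (S : ι → Set (ℝ × ℝ)) (Ω : Set (ℝ × ℝ)) : Prop :=
  (∀ i, S i ⊆ Ω) ∧
  (Pairwise fun i j => Disjoint (interior (S i)) (interior (S j))) ∧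
  volume (Ω \ ⋃ i, S i) = 0

/-- An axis-parallel rectangle `[x₁, x₂] × [y₁, y₂]`, given by its bounding coordinates. -/
structure Rect where
  x₁ : ℝ
  x₂ : ℝ
  y₁ : ℝ
  y₂ : ℝ

namespace Rect

/-- The coordinates are in the right order. -/
def Valid (R : Rect) : Prop := R.x₁ ≤ R.x₂ ∧ R.y₁ ≤ R.y₂

/-- Coordinatewise containment of rectangles. -/
def Sub (S R : Rect) : Prop := R.x₁ ≤ S.x₁ ∧ S.x₂ ≤ R.x₂ ∧ R.y₁ ≤ S.y₁ ∧ S.y₂ ≤ R.y₂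

/-- The rectangles are separated by a horizontal or vertical line. -/
def Apart (S R : Rect) : Prop := S.x₂ ≤ R.x₁ ∨ R.x₂ ≤ S.x₁ ∨ S.y₂ ≤ R.y₁ ∨ R.y₂ ≤ S.y₁

/-- The area of a rectangle. -/
def area (R : Rect) : ℝ := (R.x₂ - R.x₁) * (R.y₂ - R.y₁)

/-- The shorter sidelength of a rectangle. -/
noncomputable def width (R : Rect) : ℝ := min (R.x₂ - R.x₁) (R.y₂ - R.y₁)

/-- The longer sidelength of a rectangle. -/
noncomputable def height (R : Rect) : ℝ := max (R.x₂ - R.x₁) (R.y₂ - R.y₁)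

/-- The weighted perimeter of a rectangle. -/
noncomputable def perim (δ : ℝ) (R : Rect) : ℝ := R.width ^ δ * R.height

/-- The reflection of a rectangle in the diagonal. -/
def swap (R : Rect) : Rect := ⟨R.y₁, R.y₂, R.x₁, R.x₂⟩

/-- The square with lower-left corner `c` and sidelength `s`, as a rectangle. -/
def sq (c : ℝ × ℝ) (s : ℝ) : Rect := ⟨c.1, c.1 + s, c.2, c.2 + s⟩

lemma Sub.trans {S R Q : Rect} (h : S.Sub R) (h' : R.Sub Q) : S.Sub Q :=
  ⟨h'.1.trans h.1, h.2.1.trans h'.2.1, h'.2.2.1.trans h.2.2.1, h.2.2.2.trans h'.2.2.2⟩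

lemma Sub.refl (R : Rect) : R.Sub R := ⟨le_rfl, le_rfl, le_rfl, le_rfl⟩

lemma Apart.symm {S R : Rect} (h : S.Apart R) : R.Apart S := by
  unfold Apart at *; tauto

lemma Apart.mono {S R S' R' : Rect} (h : S.Apart R) (hS : S'.Sub S) (hR : R'.Sub R) :
    S'.Apart R' := by
  obtain ⟨a1, a2, a3, a4⟩ := hS
  obtain ⟨b1, b2, b3, b4⟩ := hR
  rcases h with h | h | h | h
  · exact Or.inl (by linarith)
  · exact Or.inr (Or.inl (by linarith))
  · exact Or.inr (Or.inr (Or.inl (by linarith)))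
  · exact Or.inr (Or.inr (Or.inr (by linarith)))

lemma area_eq_width_mul_height (R : Rect) : R.area = R.width * R.height :=
  (min_mul_max _ _).symm

lemma Valid.width_nonneg {R : Rect} (h : R.Valid) : 0 ≤ R.width :=
  le_min (sub_nonneg.2 h.1) (sub_nonneg.2 h.2)

lemma Valid.height_nonneg {R : Rect} (h : R.Valid) : 0 ≤ R.height :=
  le_max_of_le_left (sub_nonneg.2 h.1)

lemma Valid.area_nonneg {R : Rect} (h : R.Valid) : 0 ≤ R.area :=
  mul_nonneg (sub_nonneg.2 h.1) (sub_nonneg.2 h.2)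

lemma Valid.perim_le {R : Rect} (h : R.Valid) {δ a : ℝ} (hδ : 0 < δ)
    (hx : R.x₂ - R.x₁ ≤ a) (hy : R.y₂ - R.y₁ ≤ a) : R.perim δ ≤ a ^ (1 + δ) := by
  have hw := h.width_nonneg
  have hwa : R.width ≤ a := min_le_of_left_le hx
  have hha : R.height ≤ a := max_le hx hy
  have ha : 0 ≤ a := hw.trans hwa
  calc R.perim δ ≤ a ^ δ * a :=
        mul_le_mul (Real.rpow_le_rpow hw hwa hδ.le) hha h.height_nonneg (by positivity)
    _ = a ^ (1 + δ) := by
        rw [Real.rpow_add' ha (by positivity), Real.rpow_one, mul_comm]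

lemma Sub.perim_le {S R : Rect} (h : S.Sub R) (hS : S.Valid) {δ : ℝ} (hδ : 0 < δ) :
    S.perim δ ≤ R.perim δ := by
  obtain ⟨a1, a2, a3, a4⟩ := h
  have hw : S.width ≤ R.width := min_le_min (by linarith) (by linarith)
  have hh : S.height ≤ R.height := max_le_max (by linarith) (by linarith)
  exact mul_le_mul (Real.rpow_le_rpow hS.width_nonneg hw hδ.le) hh hS.height_nonneg
    (Real.rpow_nonneg (hS.width_nonneg.trans hw) _)

@[simp] lemma swap_swap (R : Rect) : R.swap.swap = R := rfl

@[simp] lemma swap_area (R : Rect) : R.swap.area = R.area := mul_comm _ _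

@[simp] lemma swap_perim (R : Rect) (δ : ℝ) : R.swap.perim δ = R.perim δ := by
  simp [perim, width, height, swap, min_comm, max_comm]

lemma Valid.swap {R : Rect} (h : R.Valid) : R.swap.Valid := ⟨h.2, h.1⟩

lemma Sub.swap {S R : Rect} (h : S.Sub R) : S.swap.Sub R.swap := ⟨h.2.2.1, h.2.2.2, h.1, h.2.1⟩

lemma Apart.swap {S R : Rect} (h : S.Apart R) : S.swap.Apart R.swap := by
  unfold Apart Rect.swap at *; tauto

/-- The total area of a list of rectangles. -/
def totalArea (L : List Rect) : ℝ := (L.map area).sum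

/-- The total weighted perimeter of a list of rectangles. -/
noncomputable def totalPerim (δ : ℝ) (L : List Rect) : ℝ := (L.map (perim δ)).sum

@[simp] lemma totalArea_append (L L' : List Rect) :
    totalArea (L ++ L') = totalArea L + totalArea L' := by simp [totalArea]

@[simp] lemma totalPerim_append (δ : ℝ) (L L' : List Rect) :
    totalPerim δ (L ++ L') = totalPerim δ L + totalPerim δ L' := by simp [totalPerim]

/-- A list of valid rectangles with pairwise disjoint interiors. -/
def Good (L : List Rect) : Prop := (∀ R ∈ L, R.Valid) ∧ L.Pairwise Apart

/-- The rectangles in `L'` are obtained from the rectangles in `L` by cutting. -/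
def Cuts (L L' : List Rect) : Prop :=
  Good L → Good L' ∧ (∀ S ∈ L', ∃ R ∈ L, S.Sub R) ∧ totalArea L' = totalArea L

lemma Cuts.refl (L : List Rect) : Cuts L L := fun h => ⟨h, fun S hS => ⟨S, hS, Sub.refl S⟩, rfl⟩

lemma Cuts.trans {L L' L'' : List Rect} (h : Cuts L L') (h' : Cuts L' L'') : Cuts L L'' := by
  intro hL
  obtain ⟨g, s, a⟩ := h hL
  obtain ⟨g', s', a'⟩ := h' g
  refine ⟨g', fun S hS => ?_, a'.trans a⟩
  obtain ⟨R, hR, hSR⟩ := s' S hS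
  obtain ⟨Q, hQ, hRQ⟩ := s R hR
  exact ⟨Q, hQ, hSR.trans hRQ⟩

lemma good_append {L L' : List Rect} : Good (L ++ L') ↔
    Good L ∧ Good L' ∧ ∀ R ∈ L, ∀ S ∈ L', R.Apart S := by
  simp only [Good, List.pairwise_append, List.mem_append]
  constructor
  · rintro ⟨h, h1, h2, h3⟩
    exact ⟨⟨fun R hR => h R (Or.inl hR), h1⟩, ⟨fun R hR => h R (Or.inr hR), h2⟩, h3⟩
  · rintro ⟨⟨h, h1⟩, ⟨h', h2⟩, h3⟩
    exact ⟨fun R hR => hR.elim (h R) (h' R), h1, h2, h3⟩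

lemma Cuts.append {L₁ L₁' L₂ L₂' : List Rect} (h₁ : Cuts L₁ L₁') (h₂ : Cuts L₂ L₂') :
    Cuts (L₁ ++ L₂) (L₁' ++ L₂') := by
  intro h
  obtain ⟨g₁, g₂, g⟩ := good_append.1 h
  obtain ⟨g₁', s₁, a₁⟩ := h₁ g₁
  obtain ⟨g₂', s₂, a₂⟩ := h₂ g₂
  refine ⟨good_append.2 ⟨g₁', g₂', fun R hR S hS => ?_⟩, fun S hS => ?_, by simp [a₁, a₂]⟩
  · obtain ⟨R', hR', hRR'⟩ := s₁ R hR
    obtain ⟨S', hS', hSS'⟩ := s₂ S hS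
    exact (g R' hR' S' hS').mono hRR' hSS'
  · rcases List.mem_append.1 hS with hS | hS
    · obtain ⟨R, hR, hSR⟩ := s₁ S hS
      exact ⟨R, List.mem_append_left _ hR, hSR⟩
    · obtain ⟨R, hR, hSR⟩ := s₂ S hS
      exact ⟨R, List.mem_append_right _ hR, hSR⟩

lemma Cuts.of_perm {L L' : List Rect} (h : L.Perm L') : Cuts L L' := by
  intro g
  refine ⟨⟨fun R hR => g.1 R (h.mem_iff.2 hR), (h.pairwise_iff (fun h => h.symm)).1 g.2⟩,
    fun S hS => ⟨S, h.mem_iff.2 hS, Sub.refl S⟩, ((h.map _).sum_eq).symm⟩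

lemma good_map_swap {L : List Rect} (h : Good L) : Good (L.map swap) := by
  refine ⟨?_, List.pairwise_map.2 (h.2.imp Apart.swap)⟩
  simp only [List.mem_map, forall_exists_index, and_imp, forall_apply_eq_imp_iff₂]
  exact fun R hR => (h.1 R hR).swap

lemma totalArea_map_swap (L : List Rect) : totalArea (L.map swap) = totalArea L := by
  simp [totalArea, Function.comp_def]

lemma totalPerim_map_swap (δ : ℝ) (L : List Rect) :
    totalPerim δ (L.map swap) = totalPerim δ L := by
  simp [totalPerim, Function.comp_def]

lemma map_swap_map_swap (L : List Rect) : (L.map swap).map swap = L := by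
  simp [Function.comp_def]

lemma Cuts.map_swap {L L' : List Rect} (h : Cuts L L') : Cuts (L.map swap) (L'.map swap) := by
  intro g
  have g' := good_map_swap g
  rw [map_swap_map_swap] at g'
  obtain ⟨g₁, s, a⟩ := h g'
  refine ⟨good_map_swap g₁, ?_, by rw [totalArea_map_swap, totalArea_map_swap, a]⟩
  simp only [List.mem_map, forall_exists_index, and_imp, forall_apply_eq_imp_iff₂]
  intro S hS
  obtain ⟨R, hR, hSR⟩ := s S hS
  exact ⟨R.swap, ⟨R, hR, rfl⟩, hSR.swap⟩

lemma cuts_vertical {R : Rect} {a : ℝ} (h₁ : R.x₁ ≤ a) (h₂ : a ≤ R.x₂) :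
    Cuts [R] [⟨R.x₁, a, R.y₁, R.y₂⟩, ⟨a, R.x₂, R.y₁, R.y₂⟩] := by
  intro g
  have hv : R.Valid := g.1 R (by simp)
  refine ⟨⟨?_, ?_⟩, ?_, ?_⟩
  · simp [Valid, h₁, h₂, hv.2]
  · simp [Apart]
  · simp [Sub, h₁, h₂]
  · simp [totalArea, area]; ring

lemma cuts_horizontal {R : Rect} {a : ℝ} (h₁ : R.y₁ ≤ a) (h₂ : a ≤ R.y₂) :
    Cuts [R] [⟨R.x₁, R.x₂, R.y₁, a⟩, ⟨R.x₁, R.x₂, a, R.y₂⟩] :=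
  (cuts_vertical (R := R.swap) h₁ h₂).map_swap

/-- Squares of sidelength `s i`, `n ≤ i < n'`, can be cut out of `L`, with `L'` left over. -/
def Packs (s : ℕ → ℝ) (n n' : ℕ) (L L' : List Rect) : Prop :=
  n ≤ n' ∧ ∃ c : ℕ → ℝ × ℝ, Cuts L ((List.Ico n n').map (fun i => sq (c i) (s i)) ++ L')

lemma Packs.refl (s : ℕ → ℝ) (n : ℕ) (L : List Rect) : Packs s n n L L :=
  ⟨le_rfl, fun _ => 0, by simpa using Cuts.refl L⟩

lemma map_Ico_merge {s : ℕ → ℝ} {n n' n'' : ℕ} (h : n ≤ n') (h' : n' ≤ n'') (c c' : ℕ → ℝ × ℝ) :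
    (List.Ico n n'').map (fun i => sq (if i < n' then c i else c' i) (s i)) =
      (List.Ico n n').map (fun i => sq (c i) (s i)) ++
        (List.Ico n' n'').map (fun i => sq (c' i) (s i)) := by
  rw [← List.Ico.append_consecutive h h', List.map_append]
  congr 1
  · refine List.map_congr_left fun i hi => ?_
    rw [if_pos (List.Ico.mem.1 hi).2]
  · refine List.map_congr_left fun i hi => ?_
    rw [if_neg (not_lt.2 (List.Ico.mem.1 hi).1)]

lemma Packs.trans {s : ℕ → ℝ} {n n' n'' : ℕ} {L L' L'' : List Rect}
    (h : Packs s n n' L L') (h' : Packs s n' n'' L' L'') : Packs s n n'' L L'' := by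
  obtain ⟨hn, c, hc⟩ := h
  obtain ⟨hn', c', hc'⟩ := h'
  refine ⟨hn.trans hn', fun i => if i < n' then c i else c' i, ?_⟩
  rw [map_Ico_merge hn hn', List.append_assoc]
  exact hc.trans ((Cuts.refl _).append hc')

lemma Packs.append_right {s : ℕ → ℝ} {n n' : ℕ} {L L' : List Rect}
    (h : Packs s n n' L L') (F : List Rect) : Packs s n n' (L ++ F) (L' ++ F) := by
  obtain ⟨hn, c, hc⟩ := h
  refine ⟨hn, c, ?_⟩
  rw [← List.append_assoc]
  exact hc.append (Cuts.refl _)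

lemma Cuts.packs {s : ℕ → ℝ} {n n' : ℕ} {L L' L'' : List Rect} (h : Cuts L L')
    (h' : Packs s n n' L' L'') : Packs s n n' L L'' :=
  ⟨h'.1, h'.2.imp fun _ hc => h.trans hc⟩

lemma Packs.map_swap {s : ℕ → ℝ} {n n' : ℕ} {L L' : List Rect}
    (h : Packs s n n' L L') : Packs s n n' (L.map swap) (L'.map swap) := by
  obtain ⟨hn, c, hc⟩ := h
  refine ⟨hn, fun i => (c i).swap, ?_⟩
  have := hc.map_swap
  rw [List.map_append, List.map_map] at this
  exact this

/-- The cell with index `p` of the grid with vertical lines `x` and horizontal lines `y`. -/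
def cell (x y : ℕ → ℕ → ℝ) (p : ℕ × ℕ) : Rect :=
  ⟨x p.1 p.2, x (p.1 + 1) p.2, y p.1 p.2, y p.1 (p.2 + 1)⟩

/-- The gap at the upper right corner of the cell with index `p`. -/
def hole (x y : ℕ → ℕ → ℝ) (p : ℕ × ℕ) : Rect :=
  ⟨x (p.1 + 1) p.2, x (p.1 + 1) (p.2 + 1), y (p.1 + 1) (p.2 + 1), y p.1 (p.2 + 1)⟩

lemma sum_map_product_range (m q : ℕ) (g : ℕ × ℕ → ℝ) :
    ((List.range m ×ˢ List.range q).map g).sum =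
      ∑ j ∈ Finset.range q, ∑ i ∈ Finset.range m, g (i, j) := by
  rw [← List.sum_toFinset g (List.nodup_range.product List.nodup_range), Finset.sum_comm,
    ← Finset.sum_product (Finset.range m) (Finset.range q) g]
  congr 1
  ext ⟨i, j⟩
  simp

lemma sum_range_sub_mul (D Y : ℕ → ℝ) (m : ℕ) :
    ∑ i ∈ Finset.range (m + 1), (D (i + 1) - D i) * Y i =
      ∑ i ∈ Finset.range m, D (i + 1) * (Y i - Y (i + 1)) + D (m + 1) * Y m - D 0 * Y 0 := by
  induction m with
  | zero => simp; ring
  | succ m ih => rw [Finset.sum_range_succ, ih, Finset.sum_range_succ]; ring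

lemma totalArea_grid {x y : ℕ → ℕ → ℝ} {m q : ℕ} {R : Rect}
    (hx0 : ∀ j ≤ q, x 0 j = R.x₁) (hx1 : ∀ j ≤ q, x (m + 1) j = R.x₂)
    (hy0 : ∀ i ≤ m, y i 0 = R.y₁) (hy1 : ∀ i ≤ m, y i (q + 1) = R.y₂) :
    totalArea ((List.range (m + 1) ×ˢ List.range (q + 1)).map (cell x y) ++
      (List.range m ×ˢ List.range q).map (hole x y)) = R.area := by
  have key : ∀ k ≤ q,
      ∑ j ∈ Finset.range (k + 1), ∑ i ∈ Finset.range (m + 1), (cell x y (i, j)).area +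
        ∑ j ∈ Finset.range k, ∑ i ∈ Finset.range m, (hole x y (i, j)).area =
      ∑ i ∈ Finset.range (m + 1), (x (i + 1) k - x i k) * y i (k + 1)
        - (R.x₂ - R.x₁) * R.y₁ := by
    intro k hk
    induction k with
    | zero =>
      have h : ∑ i ∈ Finset.range (m + 1), (x (i + 1) 0 - x i 0) * R.y₁ =
          (R.x₂ - R.x₁) * R.y₁ := by
        rw [← Finset.sum_mul, Finset.sum_range_sub (fun i => x i 0), hx0 0 hk, hx1 0 hk]
      rw [← h, ← Finset.sum_sub_distrib]
      simp only [zero_add, Finset.range_one, Finset.sum_singleton, Finset.range_zero,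
        Finset.sum_empty, add_zero, cell, area]
      refine Finset.sum_congr rfl fun i hi => ?_
      rw [hy0 i (by simpa [Nat.lt_succ_iff] using hi)]; ring
    | succ k ih =>
      have ih := ih (by omega)
      have abel := sum_range_sub_mul (fun i => x i (k + 1) - x i k) (fun i => y i (k + 1)) m
      simp only [hx0 _ hk, hx1 _ hk, hx0 k (by omega), hx1 k (by omega), sub_self, zero_mul,
        sub_zero, add_zero] at abel
      rw [Finset.sum_range_succ _ (k + 1), Finset.sum_range_succ
        (fun j => ∑ i ∈ Finset.range m, (hole x y (i, j)).area) k]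
      have h1 : ∑ i ∈ Finset.range (m + 1), (cell x y (i, k + 1)).area =
          ∑ i ∈ Finset.range (m + 1), (x (i + 1) (k + 1) - x i (k + 1)) * y i (k + 1 + 1) -
          ∑ i ∈ Finset.range (m + 1), (x (i + 1) (k + 1) - x i (k + 1)) * y i (k + 1) := by
        rw [← Finset.sum_sub_distrib]
        exact Finset.sum_congr rfl fun i _ => by simp only [cell, area]; ring
      have h2 : ∑ i ∈ Finset.range (m + 1),
          (x (i + 1) (k + 1) - x (i + 1) k - (x i (k + 1) - x i k)) * y i (k + 1) =
          ∑ i ∈ Finset.range (m + 1), (x (i + 1) (k + 1) - x i (k + 1)) * y i (k + 1) -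
          ∑ i ∈ Finset.range (m + 1), (x (i + 1) k - x i k) * y i (k + 1) := by
        rw [← Finset.sum_sub_distrib]
        exact Finset.sum_congr rfl fun i _ => by ring
      simp only [hole, area] at ih ⊢
      simp only [cell, area] at ih h1 ⊢
      linarith
  have h := key q le_rfl
  have h' : ∑ i ∈ Finset.range (m + 1), (x (i + 1) q - x i q) * y i (q + 1) =
      (R.x₂ - R.x₁) * R.y₂ := by
    rw [← hx0 q le_rfl, ← hx1 q le_rfl, ← Finset.sum_range_sub (fun i => x i q), Finset.sum_mul]
    exact Finset.sum_congr rfl fun i hi => by rw [hy1 i (by simpa [Nat.lt_succ_iff] using hi)]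
  rw [h'] at h
  rw [totalArea_append, totalArea, totalArea, List.map_map, List.map_map, sum_map_product_range,
    sum_map_product_range]
  simp only [Function.comp_apply]
  rw [h, area]
  ring

lemma cuts_grid {x y : ℕ → ℕ → ℝ} {m q : ℕ} {R : Rect}
    (hx0 : ∀ j ≤ q, x 0 j = R.x₁) (hx1 : ∀ j ≤ q, x (m + 1) j = R.x₂)
    (hy0 : ∀ i ≤ m, y i 0 = R.y₁) (hy1 : ∀ i ≤ m, y i (q + 1) = R.y₂)
    (hxi : ∀ i ≤ m, ∀ j ≤ q, x i j ≤ x (i + 1) j)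
    (hxj : ∀ i ≤ m + 1, ∀ j < q, x i j ≤ x i (j + 1))
    (hyj : ∀ i ≤ m, ∀ j ≤ q, y i j ≤ y i (j + 1))
    (hyi : ∀ i < m, ∀ j ≤ q + 1, y (i + 1) j ≤ y i j) :
    Cuts [R] ((List.range (m + 1) ×ˢ List.range (q + 1)).map (cell x y) ++
      (List.range m ×ˢ List.range q).map (hole x y)) := by
  have Xi : ∀ j ≤ q, ∀ i i', i ≤ i' → i' ≤ m + 1 → x i j ≤ x i' j := by
    intro j hj i i' h
    induction i', h using Nat.le_induction with
    | base => exact fun _ => le_rfl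
    | succ k _ ih => exact fun hk => (ih (by omega)).trans (hxi k (by omega) j hj)
  have Xj : ∀ i ≤ m + 1, ∀ j j', j ≤ j' → j' ≤ q → x i j ≤ x i j' := by
    intro i hi j j' h
    induction j', h using Nat.le_induction with
    | base => exact fun _ => le_rfl
    | succ k _ ih => exact fun hk => (ih (by omega)).trans (hxj i hi k (by omega))
  have Yj : ∀ i ≤ m, ∀ j j', j ≤ j' → j' ≤ q + 1 → y i j ≤ y i j' := by
    intro i hi j j' h
    induction j', h using Nat.le_induction with
    | base => exact fun _ => le_rfl
    | succ k _ ih => exact fun hk => (ih (by omega)).trans (hyj i hi k (by omega))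
  have Yi : ∀ j ≤ q + 1, ∀ i i', i ≤ i' → i' ≤ m → y i' j ≤ y i j := by
    intro j hj i i' h
    induction i', h using Nat.le_induction with
    | base => exact fun _ => le_rfl
    | succ k _ ih => exact fun hk => (hyi k (by omega) j hj).trans (ih (by omega))
  have X : ∀ i i' j j', i ≤ i' → i' ≤ m + 1 → j ≤ j' → j' ≤ q → x i j ≤ x i' j' :=
    fun i i' j j' h h' g g' => (Xi j (by omega) i i' h h').trans (Xj i' h' j j' g g')
  have Y : ∀ i i' j j', i' ≤ i → i ≤ m → j ≤ j' → j' ≤ q + 1 → y i j ≤ y i' j' :=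
    fun i i' j j' h h' g g' => (Yj i h' j j' g g').trans (Yi j' g' i' i h h')
  have CC : ∀ i j k l, i ≤ m → j ≤ q → k ≤ m → l ≤ q → j < l →
      (cell x y (i, j)).Apart (cell x y (k, l)) := by
    intro i j k l hi hj hk hl hjl
    rcases le_or_gt k i with h | h
    · exact Or.inr (Or.inr (Or.inl (Y _ _ _ _ h hi (by omega) (by omega))))
    · exact Or.inl (X _ _ _ _ h (by omega) (by omega) hl)
  have CC' : ∀ i k j, i < k → k ≤ m → j ≤ q →
      (cell x y (i, j)).Apart (cell x y (k, j)) :=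
    fun i k j h hk hj => Or.inl (X _ _ _ _ h (by omega) le_rfl hj)
  have HH : ∀ i j k l, i < m → j < q → k < m → l < q → j < l →
      (hole x y (i, j)).Apart (hole x y (k, l)) := by
    intro i j k l hi hj hk hl hjl
    rcases le_or_gt i k with h | h
    · exact Or.inl (X _ _ _ _ (by omega) (by omega) (by omega) (by omega))
    · exact Or.inr (Or.inr (Or.inl (Y _ _ _ _ (by omega) (by omega) (by omega) (by omega))))
  have HH' : ∀ i k j, i < k → k < m → j < q →
      (hole x y (k, j)).Apart (hole x y (i, j)) :=
    fun i k j h hk hj =>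
      Or.inr (Or.inr (Or.inl (Y _ _ _ _ (by omega) (by omega) (by omega) (by omega))))
  have CH : ∀ i j k l, i < m → j < q → k ≤ m → l ≤ q →
      (cell x y (k, l)).Apart (hole x y (i, j)) := by
    intro i j k l hi hj hk hl
    rcases le_or_gt l j with h | h <;> rcases le_or_gt k i with h' | h'
    · exact Or.inl (X _ _ _ _ (by omega) (by omega) (by omega) (by omega))
    · exact Or.inr (Or.inr (Or.inl (Y _ _ _ _ (by omega) (by omega) (by omega) (by omega))))
    · exact Or.inr (Or.inr (Or.inr (Y _ _ _ _ (by omega) (by omega) (by omega) (by omega))))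
    · exact Or.inr (Or.inl (X _ _ _ _ (by omega) (by omega) (by omega) (by omega)))
  intro _
  refine ⟨good_append.2 ⟨⟨?_, ?_⟩, ⟨?_, ?_⟩, ?_⟩, ?_, ?_⟩
  · simp only [List.mem_map, forall_exists_index, and_imp, forall_apply_eq_imp_iff₂]
    rintro ⟨i, j⟩ h
    simp only [List.mem_product, List.mem_range] at h
    exact ⟨hxi i (by omega) j (by omega), hyj i (by omega) j (by omega)⟩
  · refine List.pairwise_map.2 ((List.nodup_range.product List.nodup_range).pairwise_of_forall_ne ?_)
    rintro ⟨i, j⟩ h ⟨k, l⟩ h' hne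
    simp only [List.mem_product, List.mem_range] at h h'
    rcases lt_trichotomy j l with hjl | rfl | hjl
    · exact CC i j k l (by omega) (by omega) (by omega) (by omega) hjl
    · rcases lt_trichotomy i k with hik | rfl | hik
      · exact CC' i k j hik (by omega) (by omega)
      · exact absurd rfl hne
      · exact (CC' k i j hik (by omega) (by omega)).symm
    · exact (CC k l i j (by omega) (by omega) (by omega) (by omega) hjl).symm
  · simp only [List.mem_map, forall_exists_index, and_imp, forall_apply_eq_imp_iff₂]
    rintro ⟨i, j⟩ h
    simp only [List.mem_product, List.mem_range] at h
    exact ⟨hxj (i + 1) (by omega) j (by omega), hyi i (by omega) (j + 1) (by omega)⟩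
  · refine List.pairwise_map.2 ((List.nodup_range.product List.nodup_range).pairwise_of_forall_ne ?_)
    rintro ⟨i, j⟩ h ⟨k, l⟩ h' hne
    simp only [List.mem_product, List.mem_range] at h h'
    rcases lt_trichotomy j l with hjl | rfl | hjl
    · exact HH i j k l (by omega) (by omega) (by omega) (by omega) hjl
    · rcases lt_trichotomy i k with hik | rfl | hik
      · exact (HH' i k j hik (by omega) (by omega)).symm
      · exact absurd rfl hne
      · exact HH' k i j hik (by omega) (by omega)
    · exact (HH k l i j (by omega) (by omega) (by omega) (by omega) hjl).symm
  · simp only [List.mem_map, forall_exists_index, and_imp, forall_apply_eq_imp_iff₂]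
    rintro ⟨i, j⟩ h ⟨k, l⟩ h'
    simp only [List.mem_product, List.mem_range] at h h'
    exact CH k l i j (by omega) (by omega) (by omega) (by omega)
  · have inside : ∀ S : Rect, (∃ i j, i ≤ m + 1 ∧ j ≤ q ∧ S.x₁ = x i j) →
        (∃ i j, i ≤ m + 1 ∧ j ≤ q ∧ S.x₂ = x i j) →
        (∃ i j, i ≤ m ∧ j ≤ q + 1 ∧ S.y₁ = y i j) →
        (∃ i j, i ≤ m ∧ j ≤ q + 1 ∧ S.y₂ = y i j) → S.Sub R := by
      rintro S ⟨i, j, hi, hj, e⟩ ⟨i', j', hi', hj', e'⟩ ⟨k, l, hk, hl, g⟩ ⟨k', l', hk', hl', g'⟩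
      rw [Sub, e, e', g, g', ← hx0 j hj, ← hx1 j' hj', ← hy0 k hk, ← hy1 k' hk']
      exact ⟨X _ _ _ _ (by omega) hi le_rfl hj, X _ _ _ _ hi' le_rfl le_rfl hj',
        Y _ _ _ _ le_rfl hk (by omega) hl, Y _ _ _ _ le_rfl hk' hl' le_rfl⟩
    simp only [List.mem_append, List.mem_map, List.mem_singleton, exists_eq_left]
    rintro S (⟨⟨i, j⟩, h, rfl⟩ | ⟨⟨i, j⟩, h, rfl⟩)
    all_goals
      simp only [List.mem_product, List.mem_range] at h
      exact inside _ ⟨_, _, by omega, by omega, rfl⟩ ⟨_, _, by omega, by omega, rfl⟩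
        ⟨_, _, by omega, by omega, rfl⟩ ⟨_, _, by omega, by omega, rfl⟩
  · rw [totalArea_grid hx0 hx1 hy0 hy1]
    simp [totalArea]

lemma perm_grid_indices (n : ℕ) {m : ℕ} (q : ℕ) (hm : 0 < m) :
    (List.range (m + 1) ×ˢ List.range (q + 1)).Perm
      ((List.Ico n (n + m * q)).map (fun k => ((k - n) % m + 1, (k - n) / m)) ++
        ((List.range (q + 1)).map (fun j => (0, j)) ++
          (List.range m).map (fun i => (i + 1, q)))) := by
  have hdiv : ∀ k, n ≤ k → k < n + m * q → (k - n) / m < q := fun k h h' =>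
    Nat.div_lt_of_lt_mul (by omega)
  refine (List.perm_ext_iff_of_nodup (List.nodup_range.product List.nodup_range) ?_).2 ?_
  · refine List.Nodup.append ?_ (List.Nodup.append ?_ ?_ ?_) ?_
    · refine List.Nodup.map_on ?_ (List.Ico.nodup _ _)
      intro a ha b hb hab
      rw [List.Ico.mem] at ha hb
      simp only [Prod.mk.injEq, Nat.add_right_cancel_iff] at hab
      have h1 := Nat.div_add_mod (a - n) m
      have h2 := Nat.div_add_mod (b - n) m
      rw [hab.1, hab.2] at h1
      omega
    · exact List.nodup_range.map fun a b h => by simpa using h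
    · exact List.nodup_range.map fun a b h => by simpa using h
    · intro p hp hp'
      simp only [List.mem_map] at hp hp'
      obtain ⟨j, -, rfl⟩ := hp
      obtain ⟨i, -, h⟩ := hp'
      simp at h
    · intro p hp hp'
      simp only [List.mem_map, List.mem_append, List.Ico.mem] at hp hp'
      obtain ⟨k, hk, rfl⟩ := hp
      rcases hp' with ⟨j, -, h⟩ | ⟨i, -, h⟩
      · simp at h
      · have := hdiv k hk.1 hk.2
        simp only [Prod.mk.injEq] at h
        omega
  · rintro ⟨i, j⟩
    simp only [List.mem_product, List.mem_range, List.mem_append, List.mem_map, List.Ico.mem,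
      Prod.mk.injEq]
    constructor
    · rintro ⟨hi, hj⟩
      rcases Nat.eq_zero_or_pos i with rfl | hi0
      · exact Or.inr (Or.inl ⟨j, hj, rfl, rfl⟩)
      rcases Nat.lt_or_ge j q with hjq | hjq
      · refine Or.inl ⟨n + (m * j + (i - 1)), ⟨by omega, ?_⟩, ?_, ?_⟩
        · have : m * (j + 1) ≤ m * q := Nat.mul_le_mul_left m hjq
          rw [Nat.mul_add] at this
          omega
        · rw [Nat.add_sub_cancel_left, Nat.mul_add_mod, Nat.mod_eq_of_lt (by omega)]
          omega
        · rw [Nat.add_sub_cancel_left, Nat.mul_add_div hm, Nat.div_eq_of_lt (by omega), add_zero]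
      · exact Or.inr (Or.inr ⟨i - 1, by omega, by omega, by omega⟩)
    · rintro (⟨k, hk, rfl, rfl⟩ | ⟨k, hk, rfl, rfl⟩ | ⟨k, hk, rfl, rfl⟩)
      · have := hdiv k hk.1 hk.2
        have := Nat.mod_lt (k - n) hm
        omega
      · omega
      · omega

lemma sum_map_le_length_mul {α : Type*} (L : List α) (g : α → ℝ) (a : ℝ) (h : ∀ x ∈ L, g x ≤ a) :
    (L.map g).sum ≤ L.length * a := by
  have := List.sum_le_card_nsmul (L.map g) a (by simpa using h)
  simpa [nsmul_eq_mul] using this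

/-- The vertical lines of a packing in which the rows, consisting of squares of sidelengths
`r i j` for `i < m`, are pushed to the right side of `R`. -/
noncomputable def gridX (r : ℕ → ℕ → ℝ) (m q : ℕ) (R : Rect) (i j : ℕ) : ℝ :=
  if i = 0 then R.x₁ else R.x₂ - ∑ a ∈ Finset.Ico (i - 1) m, r a (min j (q - 1))

/-- The horizontal lines of a packing in which the columns, consisting of squares of sidelengths
`r i j` for `j < q`, are pushed to the bottom of `R`. -/
noncomputable def gridY (r : ℕ → ℕ → ℝ) (q : ℕ) (R : Rect) (i j : ℕ) : ℝ :=
  if j = q + 1 then R.y₂ else R.y₁ + ∑ b ∈ Finset.range j, r (i - 1) b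

lemma packs_grid {s : ℕ → ℝ} {n m q : ℕ} {R : Rect} {δ η B : ℝ} (hm : 0 < m) (hq : 0 < q)
    (hδ : 0 < δ) (hs : ∀ i j, n ≤ i → i ≤ j → s j ≤ s i) (hs0 : ∀ i, n ≤ i → 0 ≤ s i)
    (hη : ∀ i, n ≤ i → i < n + m * q → s n - η ≤ s i) (hmB : m * η ≤ B) (hqB : q * η ≤ B)
    (hB : B ≤ s n)
    (hW : m * s n ≤ R.x₂ - R.x₁) (hW' : R.x₂ - R.x₁ ≤ (m + 1) * s n)
    (hH : q * s n ≤ R.y₂ - R.y₁) (hH' : R.y₂ - R.y₁ ≤ (q + 1) * s n) :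
    ∃ L', Packs s n (n + m * q) [R] L' ∧
      totalPerim δ L' ≤ (m + q + 1) * (2 * s n) ^ (1 + δ) + m * q * B ^ (1 + δ) := by
  set r : ℕ → ℕ → ℝ := fun i j => s (n + (m * j + i)) with hr
  set x := gridX r m q R with hx
  set y := gridY r q R with hy
  have hη0 : 0 ≤ η := by
    have := hη n le_rfl (Nat.lt_add_of_pos_right (Nat.mul_pos hm hq)); linarith
  have hσ : 0 ≤ s n := hs0 n le_rfl
  have r_le : ∀ i j, r i j ≤ s n := fun i j => hs _ _ le_rfl (Nat.le_add_right _ _)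
  have r_nonneg : ∀ i j, 0 ≤ r i j := fun i j => hs0 _ (Nat.le_add_right _ _)
  have r_ge : ∀ i j, i < m → j < q → s n - η ≤ r i j := by
    intro i j hi hj
    refine hη _ (Nat.le_add_right _ _) ?_
    have : m * (j + 1) ≤ m * q := Nat.mul_le_mul_left m hj
    rw [Nat.mul_add] at this
    omega
  have r_anti : ∀ i j, r (i + 1) j ≤ r i j := fun i j => hs _ _ (by omega) (by omega)
  have r_anti' : ∀ i j, r i (j + 1) ≤ r i j := by
    intro i j
    refine hs _ _ (by omega) ?_
    rw [Nat.mul_add]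
    omega
  have x_succ : ∀ i j, x (i + 1) j = R.x₂ - ∑ a ∈ Finset.Ico i m, r a (min j (q - 1)) := by
    intro i j; simp [hx, gridX]
  have x_zero : ∀ j, x 0 j = R.x₁ := by intro j; simp [hx, gridX]
  have y_last : ∀ i, y i (q + 1) = R.y₂ := by intro i; simp [hy, gridY]
  have y_eq : ∀ i j, j ≤ q → y i j = R.y₁ + ∑ b ∈ Finset.range j, r (i - 1) b := by
    intro i j hj; rw [hy, gridY, if_neg (by omega)]
  have x_step : ∀ i j, i < m → x (i + 2) j - x (i + 1) j = r i (min j (q - 1)) := by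
    intro i j hi
    rw [x_succ, x_succ, Finset.sum_eq_sum_Ico_succ_bot hi]; ring
  have y_step : ∀ i j, j < q → y i (j + 1) - y i j = r (i - 1) j := by
    intro i j hj
    rw [y_eq i _ hj, y_eq i _ hj.le, Finset.sum_range_succ]; ring
  have rowsum_le : ∀ i j, ∑ a ∈ Finset.Ico i m, r a j ≤ m * s n := by
    intro i j
    calc ∑ a ∈ Finset.Ico i m, r a j ≤ ∑ a ∈ Finset.Ico 0 m, r a j :=
          Finset.sum_le_sum_of_subset_of_nonneg (Finset.Ico_subset_Ico_left (Nat.zero_le _))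
            fun a _ _ => r_nonneg a j
      _ ≤ ∑ a ∈ Finset.Ico 0 m, s n := Finset.sum_le_sum fun a _ => r_le a j
      _ = m * s n := by simp
  have rowsum_ge : ∀ j, j < q → m * s n - m * η ≤ ∑ a ∈ Finset.Ico 0 m, r a j := by
    intro j hj
    calc m * s n - m * η = ∑ a ∈ Finset.Ico 0 m, (s n - η) := by simp
      _ ≤ _ := Finset.sum_le_sum fun a ha => r_ge a j (Finset.mem_Ico.1 ha).2 hj
  have colsum_le : ∀ i, ∑ b ∈ Finset.range q, r i b ≤ q * s n := by
    intro i
    calc ∑ b ∈ Finset.range q, r i b ≤ ∑ b ∈ Finset.range q, s n :=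
          Finset.sum_le_sum fun b _ => r_le i b
      _ = q * s n := by simp
  have colsum_ge : ∀ i, i < m → q * s n - q * η ≤ ∑ b ∈ Finset.range q, r i b := by
    intro i hi
    calc q * s n - q * η = ∑ b ∈ Finset.range q, (s n - η) := by simp
      _ ≤ _ := Finset.sum_le_sum fun b hb => r_ge i b hi (Finset.mem_range.1 hb)
  have hcuts : Cuts [R] _ := cuts_grid (x := x) (y := y) (m := m) (q := q) (R := R)
    (fun j _ => x_zero j) (fun j _ => by rw [x_succ]; simp)
    (fun i _ => by rw [y_eq i 0 (Nat.zero_le _)]; simp) (fun i _ => y_last i)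
    (by
      intro i hi j _
      rcases Nat.eq_zero_or_pos i with rfl | hi0
      · rw [x_zero, x_succ]
        have := rowsum_le 0 (min j (q - 1))
        linarith
      · obtain ⟨k, rfl⟩ := Nat.exists_eq_succ_of_ne_zero hi0.ne'
        have := x_step k j (by omega)
        have := r_nonneg k (min j (q - 1))
        simp only [Nat.succ_eq_add_one] at *
        linarith)
    (by
      intro i _ j hj
      rcases Nat.eq_zero_or_pos i with rfl | hi0
      · rw [x_zero, x_zero]
      · obtain ⟨k, rfl⟩ := Nat.exists_eq_succ_of_ne_zero hi0.ne'
        simp only [Nat.succ_eq_add_one, x_succ]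
        refine sub_le_sub_left (Finset.sum_le_sum fun a _ => ?_) _
        rcases Nat.lt_or_ge (j + 1) q with h | h
        · rw [min_eq_left (by omega), min_eq_left (by omega)]
          exact r_anti' a j
        · rw [min_eq_right (by omega), min_eq_left (by omega), show q - 1 = j by omega])
    (by
      intro i _ j hj
      rcases Nat.lt_or_ge j q with h | h
      · have := y_step i j h
        have := r_nonneg (i - 1) j
        linarith
      · obtain rfl : j = q := by omega
        rw [y_last, y_eq i j le_rfl]
        have := colsum_le (i - 1)
        linarith)
    (by
      intro i _ j hj
      rcases Nat.lt_or_ge q j with h | h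
      · obtain rfl : j = q + 1 := by omega
        rw [y_last, y_last]
      · rw [y_eq _ _ h, y_eq _ _ h]
        refine add_le_add le_rfl (Finset.sum_le_sum fun b _ => ?_)
        rcases Nat.eq_zero_or_pos i with rfl | hi0
        · exact le_rfl
        · have := r_anti (i - 1) b
          rwa [show i - 1 + 1 = i + 1 - 1 by omega] at this)
  have hperm := ((perm_grid_indices n q hm).map (cell x y)).append_right
    ((List.range m ×ˢ List.range q).map (hole x y))
  rw [List.map_append, List.map_map, List.append_assoc] at hperm
  have hcuts' := hcuts.trans (Cuts.of_perm hperm)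
  have hsq : (List.Ico n (n + m * q)).map
        (cell x y ∘ fun k => ((k - n) % m + 1, (k - n) / m)) =
      (List.Ico n (n + m * q)).map (fun k => sq (x ((k - n) % m + 1) ((k - n) / m),
        y ((k - n) % m + 1) ((k - n) / m)) (s k)) := by
    refine List.map_congr_left fun k hk => ?_
    rw [List.Ico.mem] at hk
    have h1 : (k - n) % m < m := Nat.mod_lt _ hm
    have h2 : (k - n) / m < q := Nat.div_lt_of_lt_mul (by omega)
    have h3 : r ((k - n) % m) ((k - n) / m) = s k := by
      simp only [hr]
      rw [Nat.div_add_mod, Nat.add_sub_cancel' hk.1]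
    have h4 := x_step _ ((k - n) / m) h1
    have h5 := y_step ((k - n) % m + 1) _ h2
    rw [min_eq_left (by omega), h3] at h4
    rw [Nat.add_sub_cancel, h3] at h5
    simp only [Function.comp_apply, cell, sq, mk.injEq, true_and]
    exact ⟨by linarith, by linarith⟩
  rw [hsq] at hcuts'
  refine ⟨_, ⟨Nat.le_add_right _ _, _, hcuts'⟩, ?_⟩
  have hR : R.Valid := ⟨sub_nonneg.1 (le_trans (by positivity) hW),
    sub_nonneg.1 (le_trans (by positivity) hH)⟩
  have hgood := (hcuts' ⟨by simpa using hR, by simp⟩).1.1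
  have hvalid : ∀ S ∈ ((List.range (q + 1)).map (fun j => (0, j)) ++
      (List.range m).map (fun i => (i + 1, q))).map (cell x y) ++
        (List.range m ×ˢ List.range q).map (hole x y), S.Valid :=
    fun S hS => hgood S (List.mem_append_right _ hS)
  have hmη : m * η ≤ s n := hmB.trans hB
  have hqη : q * η ≤ s n := hqB.trans hB
  have topheight : ∀ i, i ≤ m → y i (q + 1) - y i q ≤ 2 * s n := by
    intro i hi
    rw [y_last, y_eq i q le_rfl]
    have := colsum_ge (i - 1) (by omega)
    linarith
  have leftwidth : ∀ j, x 1 j - x 0 j ≤ 2 * s n := by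
    intro j
    rw [x_zero, x_succ]
    have := rowsum_ge (min j (q - 1)) (by omega)
    linarith
  have border : ((((List.range (q + 1)).map (fun j => (0, j)) ++
      (List.range m).map (fun i => (i + 1, q)))).map (fun p => (cell x y p).perim δ)).sum ≤
        (m + q + 1) * (2 * s n) ^ (1 + δ) := by
    refine (sum_map_le_length_mul _ _ ((2 * s n) ^ (1 + δ)) fun p hp => ?_).trans_eq ?_
    · have hv : (cell x y p).Valid :=
        hvalid _ (List.mem_append_left _ (List.mem_map_of_mem hp))
      simp only [List.mem_append, List.mem_map, List.mem_range] at hp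
      rcases hp with ⟨j, hj, rfl⟩ | ⟨i, hi, rfl⟩
      · refine hv.perim_le hδ (leftwidth j) ?_
        rcases Nat.lt_or_ge j q with h | h
        · have := y_step 0 j h
          have := r_le (0 - 1) j
          simp only [cell]
          linarith
        · obtain rfl : j = q := by omega
          exact topheight 0 (Nat.zero_le _)
      · refine hv.perim_le hδ ?_ (topheight (i + 1) hi)
        have := x_step i q hi
        have := r_le i (min q (q - 1))
        simp only [cell]
        linarith
    · simp only [List.length_append, List.length_map, List.length_range]
      push_cast
      ring
  have inner : ((List.range m ×ˢ List.range q).map (fun p => (hole x y p).perim δ)).sum ≤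
      m * q * B ^ (1 + δ) := by
    refine (sum_map_le_length_mul _ _ (B ^ (1 + δ)) fun p hp => ?_).trans_eq ?_
    · have hv : (hole x y p).Valid :=
        hvalid _ (List.mem_append_right _ (List.mem_map_of_mem hp))
      obtain ⟨i, j⟩ := p
      simp only [List.mem_product, List.mem_range] at hp
      refine hv.perim_le hδ ?_ ?_
      · simp only [hole, x_succ]
        rw [sub_sub_sub_cancel_left, ← Finset.sum_sub_distrib]
        calc _ ≤ ∑ a ∈ Finset.Ico i m, η := Finset.sum_le_sum fun a ha => by
              have := r_le a (min j (q - 1))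
              have := r_ge a (min (j + 1) (q - 1)) (Finset.mem_Ico.1 ha).2 (by omega)
              linarith
          _ = (m - i : ℕ) * η := by simp
          _ ≤ m * η := mul_le_mul_of_nonneg_right (by exact_mod_cast Nat.sub_le _ _) hη0
          _ ≤ B := hmB
      · simp only [hole]
        rw [y_eq _ _ (by omega), y_eq _ _ (by omega), add_sub_add_left_eq_sub,
          ← Finset.sum_sub_distrib]
        calc _ ≤ ∑ b ∈ Finset.range (j + 1), η := Finset.sum_le_sum fun b hb => by
              rw [Finset.mem_range] at hb
              have := r_le (i - 1) b
              have := r_ge (i + 1 - 1) b (by omega) (by omega)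
              linarith
          _ = (j + 1 : ℕ) * η := by simp
          _ ≤ q * η := mul_le_mul_of_nonneg_right (by exact_mod_cast hp.2) hη0
          _ ≤ B := hqB
    · rw [List.length_product, List.length_range, List.length_range]
      push_cast
      ring
  rw [totalPerim_append, totalPerim, totalPerim, List.map_map, List.map_map]
  exact add_le_add border inner

lemma packs_piece {s : ℕ → ℝ} {n M : ℕ} {R : Rect} {δ θ s₀ : ℝ} (hM : 0 < M) (hδ : 0 < δ)
    (hδ' : δ ≤ 1) (hθ : 50 / M ≤ θ) (hs : ∀ i j, n ≤ i → i ≤ j → s j ≤ s i)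
    (hs0 : ∀ i, n ≤ i → 0 < s i)
    (hvar : ∀ i, n ≤ i → i ≤ n + 9 * M ^ 2 → s n * (1 - 1 / (528 * M ^ 2)) ≤ s i)
    (hs₀ : s n ≤ s₀) (hs₀' : s₀ ^ 2 ≤ 3 / 2 * s n ^ 2)
    (hW : M * s₀ ≤ R.x₂ - R.x₁) (hW' : R.x₂ - R.x₁ ≤ 2 * M * s₀)
    (hH : M * s₀ ≤ R.y₂ - R.y₁) (hH' : R.y₂ - R.y₁ ≤ 2 * M * s₀) :
    ∃ n' L', n < n' ∧ n' ≤ n + 6 * M ^ 2 ∧ Packs s n n' [R] L' ∧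
      totalPerim δ L' ≤ θ * ∑ i ∈ Finset.Ico n n', s i ^ (1 + δ) := by
  have hσ : 0 < s n := hs0 n le_rfl
  have hM1 : (1 : ℝ) ≤ M := by exact_mod_cast hM
  have hs₀0 : 0 < s₀ := hσ.trans_le hs₀
  have hs₀σ : s₀ ≤ 5 / 4 * s n := by nlinarith
  have count : ∀ W : ℝ, M * s₀ ≤ W → W ≤ 2 * M * s₀ → ∃ m : ℕ, M ≤ m ∧ (m : ℝ) * s n ≤ W ∧
      W ≤ (m + 1) * s n := by
    intro W h _
    refine ⟨⌊W / s n⌋₊, Nat.le_floor ?_, ?_, ?_⟩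
    · rw [le_div_iff₀ hσ]
      exact (mul_le_mul_of_nonneg_left hs₀ (by positivity)).trans h
    · rw [← le_div_iff₀ hσ]
      exact Nat.floor_le (div_nonneg (le_trans (by positivity) ((mul_le_mul_of_nonneg_left hs₀
        (by positivity : (0 : ℝ) ≤ M)).trans h)) hσ.le)
    · rw [← div_le_iff₀ hσ]
      exact (Nat.lt_floor_add_one _).le
  obtain ⟨m, hm, hmW, hWm⟩ := count _ hW hW'
  obtain ⟨q, hq, hqH, hHq⟩ := count _ hH hH'
  have hmR : (M : ℝ) ≤ m := by exact_mod_cast hm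
  have hqR : (M : ℝ) ≤ q := by exact_mod_cast hq
  have upper : ∀ k : ℕ, (k : ℝ) * s n ≤ 2 * M * s₀ → (k : ℝ) ≤ 5 / 2 * M := by
    intro k hk
    refine le_of_mul_le_mul_right (hk.trans ?_) hσ
    calc 2 * M * s₀ ≤ 2 * M * (5 / 4 * s n) := mul_le_mul_of_nonneg_left hs₀σ (by positivity)
      _ = _ := by ring
  have hmU := upper m (hmW.trans hW')
  have hqU := upper q (hqH.trans hH')
  have hmq : (m : ℝ) * q ≤ 6 * M ^ 2 := by
    refine le_of_mul_le_mul_right ?_ (pow_pos hσ 2)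
    calc (m : ℝ) * q * s n ^ 2 = (m * s n) * (q * s n) := by ring
      _ ≤ (2 * M * s₀) * (2 * M * s₀) :=
          mul_le_mul (hmW.trans hW') (hqH.trans hH') (by positivity) (by positivity)
      _ = 4 * M ^ 2 * s₀ ^ 2 := by ring
      _ ≤ 4 * M ^ 2 * (3 / 2 * s n ^ 2) := mul_le_mul_of_nonneg_left hs₀' (by positivity)
      _ = _ := by ring
  have hmqN : m * q ≤ 6 * M ^ 2 := by exact_mod_cast hmq
  set ε : ℝ := 1 / (528 * M ^ 2) with hε
  have hε0 : 0 < ε := by positivity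
  have hεM : ε * M ^ 2 = 1 / 528 := by rw [hε]; field_simp
  have hε1 : ε ≤ 1 / 528 := 
    one_div_le_one_div_of_le (by norm_num) (by linarith [one_le_pow₀ (n := 2) hM1])
  set β : ℝ := 5 / 2 * M * ε with hβ
  have hβ0 : 0 < β := by positivity
  have hβM : β * M = 5 / 1056 := by
    rw [hβ, show 5 / 2 * M * ε * M = 5 / 2 * (ε * M ^ 2) by ring, hεM]; norm_num
  have hβ1 : β ≤ 1 := (le_mul_of_one_le_right hβ0.le hM1).trans (by rw [hβM]; norm_num)
  have hbound : ∀ k : ℕ, (k : ℝ) ≤ 5 / 2 * M → (k : ℝ) * (ε * s n) ≤ β * s n := by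
    intro k hk
    rw [hβ, ← mul_assoc]
    gcongr
  obtain ⟨L', hL', hper⟩ := packs_grid (s := s) (n := n) (m := m) (q := q) (R := R) (δ := δ)
    (η := ε * s n) (B := β * s n) (by omega) (by omega) hδ hs (fun i hi => (hs0 i hi).le)
    (fun i hi hi' => by
      have := hvar i hi (by omega)
      linarith) (hbound m hmU) (hbound q hqU) (mul_le_of_le_one_left hσ.le hβ1) hmW hWm hqH hHq
  refine ⟨n + m * q, L', Nat.lt_add_of_pos_right (Nat.mul_pos (by omega) (by omega)), by omega,
    hL', hper.trans ?_⟩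
  set P := s n ^ (1 + δ) with hP
  have hP0 : 0 < P := Real.rpow_pos_of_pos hσ _
  have h4 : (2 * s n) ^ (1 + δ) ≤ 4 * P := by
    rw [Real.mul_rpow (by norm_num) hσ.le]
    refine mul_le_mul_of_nonneg_right ?_ hP0.le
    calc (2 : ℝ) ^ (1 + δ) ≤ 2 ^ (2 : ℝ) :=
          Real.rpow_le_rpow_of_exponent_le (by norm_num) (by linarith)
      _ = 4 := by norm_num
  have hB : (β * s n) ^ (1 + δ) ≤ β * P := by
    rw [Real.mul_rpow hβ0.le hσ.le]
    refine mul_le_mul_of_nonneg_right ?_ hP0.le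
    calc β ^ (1 + δ) ≤ β ^ (1 : ℝ) :=
          Real.rpow_le_rpow_of_exponent_ge hβ0 hβ1 (by linarith)
      _ = β := Real.rpow_one _
  have cost : (m + q + 1) * (2 * s n) ^ (1 + δ) + m * q * (β * s n) ^ (1 + δ) ≤ 25 * M * P := by
    calc _ ≤ (5 * M + 1) * (4 * P) + 6 * M ^ 2 * (β * P) := by
          gcongr
          linarith
      _ = (20 * M + 4 + 6 * M * (β * M)) * P := by ring
      _ ≤ 25 * M * P := by
          refine mul_le_mul_of_nonneg_right ?_ hP0.le
          rw [hβM]; linarith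
  have each : ∀ i ∈ Finset.Ico n (n + m * q), P / 2 ≤ s i ^ (1 + δ) := by
    intro i hi
    rw [Finset.mem_Ico] at hi
    have h1 := hvar i hi.1 (by omega)
    have h2 : (s n * (1 - ε)) ^ (1 + δ) ≤ s i ^ (1 + δ) :=
      Real.rpow_le_rpow (mul_nonneg hσ.le (by linarith)) h1 (by linarith)
    refine le_trans ?_ h2
    rw [Real.mul_rpow hσ.le (by linarith), div_eq_mul_inv]
    refine mul_le_mul_of_nonneg_left ?_ hP0.le
    calc (2 : ℝ)⁻¹ ≤ (1 - ε) ^ (2 : ℝ) := by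
          rw [Real.rpow_two]; linarith [sq_nonneg ε, sub_sq 1 ε]
      _ ≤ (1 - ε) ^ (1 + δ) :=
          Real.rpow_le_rpow_of_exponent_ge (by linarith) (by linarith) (by linarith)
  have gain : M ^ 2 * (P / 2) ≤ ∑ i ∈ Finset.Ico n (n + m * q), s i ^ (1 + δ) := by
    calc M ^ 2 * (P / 2) ≤ (m * q : ℕ) * (P / 2) := by
          refine mul_le_mul_of_nonneg_right ?_ (by positivity)
          push_cast
          rw [pow_two]
          gcongr
      _ = ∑ i ∈ Finset.Ico n (n + m * q), P / 2 := by simp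
      _ ≤ _ := Finset.sum_le_sum each
  calc _ ≤ 25 * M * P := cost
    _ = 50 / M * (M ^ 2 * (P / 2)) := by field_simp; norm_num
    _ ≤ θ * ∑ i ∈ Finset.Ico n (n + m * q), s i ^ (1 + δ) :=
        mul_le_mul hθ gain (by positivity) (le_trans (by positivity) hθ)

lemma packs_strip {s : ℕ → ℝ} {n₁ N M : ℕ} {δ θ s₀ W : ℝ} (hM : 0 < M) (hδ : 0 < δ)
    (hδ' : δ ≤ 1) (hθ : 50 / M ≤ θ) (hs : ∀ i j, n₁ ≤ i → i ≤ j → s j ≤ s i)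
    (hs0 : ∀ i, n₁ ≤ i → 0 < s i)
    (hvar : ∀ n, n₁ ≤ n → ∀ i, n ≤ i → i ≤ n + 9 * M ^ 2 →
      s n * (1 - 1 / (528 * M ^ 2)) ≤ s i)
    (hs₀ : ∀ n, n₁ ≤ n → s n ≤ s₀) (hs₀' : ∀ n, n₁ ≤ n → n ≤ N → s₀ ^ 2 ≤ 3 / 2 * s n ^ 2)
    (hW : M * s₀ ≤ W) (hW' : W ≤ 2 * M * s₀) (k : ℕ) :
    ∀ n R, n₁ ≤ n → n + 6 * M ^ 2 * (k + 1) ≤ N → R.x₂ - R.x₁ = (k + 1) * W →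
      M * s₀ ≤ R.y₂ - R.y₁ → R.y₂ - R.y₁ ≤ 2 * M * s₀ →
    ∃ n' L', n < n' ∧ Packs s n n' [R] L' ∧
      totalPerim δ L' ≤ θ * ∑ i ∈ Finset.Ico n n', s i ^ (1 + δ) := by
  have piece : ∀ n R, n₁ ≤ n → n ≤ N → R.x₂ - R.x₁ = W →
      M * s₀ ≤ R.y₂ - R.y₁ → R.y₂ - R.y₁ ≤ 2 * M * s₀ →
      ∃ n' L', n < n' ∧ n' ≤ n + 6 * M ^ 2 ∧ Packs s n n' [R] L' ∧
        totalPerim δ L' ≤ θ * ∑ i ∈ Finset.Ico n n', s i ^ (1 + δ) :=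
    fun n R hn hN hRW hH hH' => packs_piece hM hδ hδ' hθ (fun i j hi => hs i j (hn.trans hi))
      (fun i hi => hs0 i (hn.trans hi)) (hvar n hn) (hs₀ n hn) (hs₀' n hn hN)
      (hRW ▸ hW) (hRW ▸ hW') hH hH'
  have hW0 : 0 ≤ W := le_trans
    (mul_nonneg (Nat.cast_nonneg _) ((hs0 n₁ le_rfl).le.trans (hs₀ n₁ le_rfl))) hW
  induction k with
  | zero =>
    intro n R hn hN hRW hH hH'
    obtain ⟨n', L', h1, -, h2⟩ := piece n R hn (by omega) (by simpa using hRW) hH hH'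
    exact ⟨n', L', h1, h2⟩
  | succ k ih =>
    intro n R hn hN hRW hH hH'
    push_cast at hRW
    have hk : (0 : ℝ) ≤ (k + 1) * W := mul_nonneg (by positivity) hW0
    obtain ⟨n', L', h1, h1', h2, h3⟩ := piece n ⟨R.x₁, R.x₁ + W, R.y₁, R.y₂⟩ hn (by omega)
      (by simp) hH hH'
    obtain ⟨n'', L'', g1, g2, g3⟩ := ih n' ⟨R.x₁ + W, R.x₂, R.y₁, R.y₂⟩ (by omega)
      (by rw [Nat.mul_add] at hN; omega) (by dsimp only; linarith) hH hH'
    refine ⟨n'', L' ++ L'', h1.trans g1, ?_, ?_⟩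
    · have cut : Cuts [R] ([⟨R.x₁, R.x₁ + W, R.y₁, R.y₂⟩] ++ [⟨R.x₁ + W, R.x₂, R.y₁, R.y₂⟩]) :=
        cuts_vertical (by linarith) (by linarith)
      refine cut.packs ((h2.append_right _).trans ?_)
      have hp : ∀ A B : List Rect, Cuts (A ++ B) (B ++ A) :=
        fun A B => Cuts.of_perm List.perm_append_comm
      obtain ⟨h, c, hc⟩ := g2.append_right L'
      exact ⟨h, c, (hp _ _).trans (hc.trans ((Cuts.refl _).append (hp _ _)))⟩
    · rw [totalPerim_append, ← Finset.sum_Ico_consecutive _ h1.le g1.le, mul_add]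
      exact add_le_add h3 g3

lemma packs_of_wide {s : ℕ → ℝ} {n N M : ℕ} {δ θ : ℝ} (hM : 0 < M) (hδ : 0 < δ)
    (hδ' : δ ≤ 1) (hθ : 50 / M ≤ θ) (hs : ∀ i j, n ≤ i → i ≤ j → s j ≤ s i)
    (hs0 : ∀ i, n ≤ i → 0 < s i)
    (hvar : ∀ k, n ≤ k → ∀ i, k ≤ i → i ≤ k + 9 * M ^ 2 →
      s k * (1 - 1 / (528 * M ^ 2)) ≤ s i)
    (hcmp : ∀ k, n ≤ k → k ≤ N → s n ^ 2 ≤ 3 / 2 * s k ^ 2) (hN : n + 6 * M / s n ≤ N)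
    {R : Rect} (hR : R.Valid) (hwide : M * s n ≤ R.width) (hR1 : R.width ≤ 1) :
    ∃ n' L', n < n' ∧ Packs s n n' [R] L' ∧
      totalPerim δ L' ≤ R.perim δ + θ * ∑ i ∈ Finset.Ico n n', s i ^ (1 + δ) := by
  wlog hxy : R.x₂ - R.x₁ ≤ R.y₂ - R.y₁ generalizing R
  · have hsw : R.swap.width = R.width := min_comm _ _
    obtain ⟨n', L', h1, h2, h3⟩ := this hR.swap (hsw ▸ hwide) (hsw ▸ hR1) (le_of_not_ge hxy)
    exact ⟨n', L'.map swap, h1, h2.map_swap, by rwa [totalPerim_map_swap, ← swap_perim R δ]⟩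
  have hσ : 0 < s n := hs0 n le_rfl
  have hMs : 0 < M * s n := mul_pos (by exact_mod_cast hM) hσ
  have hw : R.width = R.x₂ - R.x₁ := min_eq_left hxy
  rw [hw] at hwide hR1
  set w := R.x₂ - R.x₁ with hw_def
  have h1 : 1 ≤ ⌊w / (M * s n)⌋₊ := Nat.le_floor (by rw [le_div_iff₀ hMs]; simpa using hwide)
  obtain ⟨k, hk⟩ : ∃ k, ⌊w / (M * s n)⌋₊ = k + 1 := ⟨_, (Nat.sub_add_cancel h1).symm⟩
  have hk1 : ((k : ℝ) + 1) * (M * s n) ≤ w := by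
    have := Nat.floor_le (div_nonneg (hMs.le.trans hwide) hMs.le)
    rw [hk, le_div_iff₀ hMs] at this
    exact_mod_cast this
  have hk2 : w ≤ (k + 1 + 1) * (M * s n) := by
    have := (Nat.lt_floor_add_one (w / (M * s n))).le
    rw [hk, div_le_iff₀ hMs] at this
    exact_mod_cast this
  have hk0 : (0 : ℝ) < k + 1 := by positivity
  obtain ⟨n', L', g1, g2, g3⟩ := packs_strip (s := s) (n₁ := n) (N := N) (s₀ := s n)
    (W := w / (k + 1)) hM hδ hδ' hθ hs hs0 hvar (fun i hi => hs n i le_rfl hi) hcmp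
    (by rw [le_div_iff₀ hk0]; linarith)
    (by
      rw [div_le_iff₀ hk0]
      have := mul_nonneg k.cast_nonneg hMs.le
      linarith) k n
    ⟨R.x₁, R.x₂, R.y₁, R.y₁ + M * s n⟩ le_rfl
    (by
      have h : (n : ℝ) + 6 * M ^ 2 * (k + 1) ≤ N := by
        refine le_trans (add_le_add le_rfl ?_) hN
        rw [le_div_iff₀ hσ]
        calc 6 * (M : ℝ) ^ 2 * (k + 1) * s n = 6 * M * ((k + 1) * (M * s n)) := by ring
          _ ≤ 6 * M * 1 := mul_le_mul_of_nonneg_left (hk1.trans hR1) (by positivity)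
          _ = 6 * M := mul_one _
      exact_mod_cast h)
    (by dsimp only; rw [mul_div_cancel₀ _ hk0.ne']) (by linarith) (by linarith)
  refine ⟨n', L' ++ [⟨R.x₁, R.x₂, R.y₁ + M * s n, R.y₂⟩], g1, ?_, ?_⟩
  · have cut : Cuts [R] ([⟨R.x₁, R.x₂, R.y₁, R.y₁ + M * s n⟩] ++
        [⟨R.x₁, R.x₂, R.y₁ + M * s n, R.y₂⟩]) :=
      cuts_horizontal (by linarith) (by linarith)
    exact cut.packs (g2.append_right _)
  · rw [totalPerim_append, add_comm]
    refine add_le_add ?_ g3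
    simp only [totalPerim, List.map_cons, List.map_nil, List.sum_cons, List.sum_nil, add_zero]
    have h1 : R.y₁ ≤ R.y₁ + M * s n := by linarith
    have h2 : R.y₁ + M * s n ≤ R.y₂ := by linarith
    refine Sub.perim_le ?_ ?_ hδ
    exacts [⟨le_rfl, le_rfl, h1, le_rfl⟩, ⟨hR.1, h2⟩]

lemma totalArea_le_of_width_le {L : List Rect} (hL : Good L) {δ a : ℝ} (hδ' : δ < 1)
    (h : ∀ R ∈ L, R.width ≤ a) : totalArea L ≤ a ^ (1 - δ) * totalPerim δ L := by
  rw [totalArea, totalPerim, ← List.sum_map_mul_left]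
  refine List.sum_le_sum fun R hR => ?_
  have hv := hL.1 R hR
  have hw := hv.width_nonneg
  rw [area_eq_width_mul_height, perim, ← mul_assoc]
  refine mul_le_mul_of_nonneg_right ?_ hv.height_nonneg
  calc R.width = R.width ^ (1 - δ) * R.width ^ δ := by
        rw [← Real.rpow_add' hw (by simp), sub_add_cancel, Real.rpow_one]
    _ ≤ a ^ (1 - δ) * R.width ^ δ := by
        gcongr
        exact h R hR

lemma area_le_totalArea {L : List Rect} (hL : Good L) {R : Rect} (hR : R ∈ L) :
    R.area ≤ totalArea L :=
  List.single_le_sum (by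
    simp only [List.mem_map, forall_exists_index, and_imp, forall_apply_eq_imp_iff₂]
    exact fun S hS => (hL.1 S hS).area_nonneg) _ (List.mem_map_of_mem hR)

lemma Packs.totalArea_add {s : ℕ → ℝ} {n n' : ℕ} {L L' : List Rect} (h : Packs s n n' L L')
    (hL : Good L) : ∑ i ∈ Finset.Ico n n', s i ^ 2 + totalArea L' = totalArea L := by
  obtain ⟨-, c, hc⟩ := h
  rw [← (hc hL).2.2, totalArea_append]
  congr 1
  rw [totalArea, List.map_map, ← List.sum_toFinset _ (List.Ico.nodup _ _)]
  refine Finset.sum_congr (by ext; simp) fun i _ => ?_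
  simp [area, sq, pow_two]

lemma exists_packs_step {s : ℕ → ℝ} {n N M : ℕ} {δ θ : ℝ} (hM : 0 < M) (hδ : 0 < δ)
    (hδ' : δ < 1) (hθ : 50 / M ≤ θ) (hs : ∀ i j, n ≤ i → i ≤ j → s j ≤ s i)
    (hs0 : ∀ i, n ≤ i → 0 < s i)
    (hvar : ∀ k, n ≤ k → ∀ i, k ≤ i → i ≤ k + 9 * M ^ 2 →
      s k * (1 - 1 / (528 * M ^ 2)) ≤ s i)
    (hcmp : ∀ k, n ≤ k → k ≤ N → s n ^ 2 ≤ 3 / 2 * s k ^ 2) (hN : n + 6 * M / s n ≤ N)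
    {L : List Rect} (hL : Good L) (hL1 : totalArea L ≤ 1)
    (hwide : (M * s n) ^ (1 - δ) * totalPerim δ L < totalArea L) :
    ∃ n' L', n < n' ∧ Packs s n n' L L' ∧
      totalPerim δ L' ≤ totalPerim δ L + θ * ∑ i ∈ Finset.Ico n n', s i ^ (1 + δ) := by
  obtain ⟨R, hR, hRw⟩ : ∃ R ∈ L, M * s n < R.width := by
    by_contra! h
    exact hwide.not_ge (totalArea_le_of_width_le hL hδ' h)
  have hv := hL.1 R hR
  have hR1 : R.width ≤ 1 := by
    have h1 : R.width ≤ R.height := min_le_max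
    have h2 := area_le_totalArea hL hR
    rw [area_eq_width_mul_height] at h2
    nlinarith [hv.width_nonneg]
  obtain ⟨n', L', h1, h2, h3⟩ := packs_of_wide hM hδ hδ'.le hθ hs hs0 hvar hcmp hN hv hRw.le hR1
  obtain ⟨A, B, rfl⟩ := List.append_of_mem hR
  have hp : (A ++ R :: B).Perm ([R] ++ (A ++ B)) := List.perm_middle
  refine ⟨n', L' ++ (A ++ B), h1, (Cuts.of_perm hp).packs (h2.append_right _), ?_⟩
  have : totalPerim δ (A ++ R :: B) = R.perim δ + totalPerim δ (A ++ B) := by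
    rw [totalPerim, (hp.map _).sum_eq]
    simp [totalPerim]
  rw [this, totalPerim_append]
  linarith

lemma exists_positions {s : ℕ → ℝ} {n₀ : ℕ} {L₀ : List Rect} (Inv : ℕ → List Rect → Prop)
    (hL₀ : Good L₀) (h₀ : Inv n₀ L₀)
    (step : ∀ n L, n₀ ≤ n → Good L → Inv n L →
      ∃ n' L', n < n' ∧ Packs s n n' L L' ∧ Inv n' L') :
    ∃ pos : ℕ → ℝ × ℝ, (∀ i, n₀ ≤ i → ∃ R ∈ L₀, (sq (pos i) (s i)).Sub R) ∧
      ∀ i j, n₀ ≤ i → n₀ ≤ j → i ≠ j → (sq (pos i) (s i)).Apart (sq (pos j) (s j)) := by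
  let State := {p : ℕ × List Rect × (ℕ → ℝ × ℝ) // n₀ ≤ p.1 ∧ Inv p.1 p.2.1 ∧
    Cuts L₀ ((List.Ico n₀ p.1).map (fun i => sq (p.2.2 i) (s i)) ++ p.2.1)}
  have next : ∀ S : State, ∃ S' : State, S.1.1 < S'.1.1 ∧
      ∀ i, i < S.1.1 → S'.1.2.2 i = S.1.2.2 i := by
    rintro ⟨⟨n, L, c⟩, hn, hI, hC⟩
    dsimp only at hn hI hC
    obtain ⟨n', L', h1, ⟨h2, c', hc'⟩, h3⟩ := step n L hn (good_append.1 (hC hL₀).1).2.1 hI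
    refine ⟨⟨⟨n', L', fun i => if i < n then c i else c' i⟩, hn.trans h2, h3, ?_⟩, h1,
      fun i hi => if_pos hi⟩
    dsimp only
    rw [map_Ico_merge hn h2, List.append_assoc]
    exact hC.trans ((Cuts.refl _).append hc')
  choose nxt hlt heq using next
  let S₀ : State := ⟨⟨n₀, L₀, fun _ => 0⟩, le_rfl, h₀, by simpa using Cuts.refl L₀⟩
  let S : ℕ → State := fun k => nxt^[k] S₀
  have S_succ : ∀ k, S (k + 1) = nxt (S k) := fun k => Function.iterate_succ_apply' _ _ _
  have S_ge : ∀ k, k ≤ (S k).1.1 := by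
    intro k
    induction k with
    | zero => exact Nat.zero_le _
    | succ k ih =>
      rw [S_succ]
      exact ih.trans_lt (hlt _)
  have S_pos : ∀ i k, i + 1 ≤ k → (S k).1.2.2 i = (S (i + 1)).1.2.2 i := by
    intro i k hk
    induction k, hk using Nat.le_induction with
    | base => rfl
    | succ k hk ih =>
      rw [S_succ, heq _ _ (hk.trans (S_ge k)), ih]
  have mem : ∀ i k, n₀ ≤ i → i + 1 ≤ k → sq ((S (i + 1)).1.2.2 i) (s i) ∈
      (List.Ico n₀ (S k).1.1).map (fun i => sq ((S k).1.2.2 i) (s i)) := by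
    intro i k hi hk
    refine List.mem_map.2 ⟨i, List.Ico.mem.2 ⟨hi, hk.trans (S_ge k)⟩, ?_⟩
    rw [S_pos i k hk]
  refine ⟨fun i => (S (i + 1)).1.2.2 i, fun i hi => ?_, fun i j hi hj hij => ?_⟩
  · exact ((S (i + 1)).2.2.2 hL₀).2.1 _ (List.mem_append_left _ (mem i _ hi le_rfl))
  · set k := max (i + 1) (j + 1) with hk
    have hpw := (List.pairwise_map.1 (good_append.1 ((S k).2.2.2 hL₀).1).1.2)
    have : Std.Symm fun i j => (sq ((S k).1.2.2 i) (s i)).Apart (sq ((S k).1.2.2 j) (s j)) :=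
      ⟨fun _ _ h => h.symm⟩
    have := hpw.forall (List.Ico.mem.2 ⟨hi, (le_max_left _ _).trans (S_ge k)⟩)
      (List.Ico.mem.2 ⟨hj, (le_max_right _ _).trans (S_ge k)⟩) hij
    rwa [S_pos i k (le_max_left _ _), S_pos j k (le_max_right _ _)] at this

end Rect

lemma interior_square (c : ℝ × ℝ) (s : ℝ) :
    interior (square c s) = Set.Ioo c.1 (c.1 + s) ×ˢ Set.Ioo c.2 (c.2 + s) := by
  rw [square, interior_prod_eq, interior_Icc, interior_Icc]

lemma volume_interior_square (c : ℝ × ℝ) {s : ℝ} (hs : 0 ≤ s) :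
    volume (interior (square c s)) = ENNReal.ofReal (s ^ 2) := by
  rw [interior_square, Measure.volume_eq_prod, Measure.prod_prod, Real.volume_Ioo,
    Real.volume_Ioo, add_sub_cancel_left, add_sub_cancel_left, ← ENNReal.ofReal_mul hs, pow_two]

lemma volume_square (c : ℝ × ℝ) {s : ℝ} (hs : 0 ≤ s) :
    volume (square c s) = ENNReal.ofReal (s ^ 2) := by
  rw [square, Measure.volume_eq_prod, Measure.prod_prod, Real.volume_Icc,
    Real.volume_Icc, add_sub_cancel_left, add_sub_cancel_left, ← ENNReal.ofReal_mul hs, pow_two]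

lemma disjoint_interior_square {c d : ℝ × ℝ} {a b : ℝ}
    (h : (Rect.sq c a).Apart (Rect.sq d b)) :
    Disjoint (interior (square c a)) (interior (square d b)) := by
  rw [interior_square, interior_square, Set.disjoint_left]
  rintro ⟨x, y⟩ ⟨⟨h1, h2⟩, h3, h4⟩ ⟨⟨h5, h6⟩, h7, h8⟩
  simp only [Rect.Apart, Rect.sq] at h h1 h2 h3 h4 h5 h6 h7 h8
  rcases h with h | h | h | h <;> linarith

lemma perfectlyPacked_of_apart {ι : Type*} [Countable ι] {s : ι → ℝ} {pos : ι → ℝ × ℝ}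
    {c : ℝ × ℝ} (hs : ∀ i, 0 ≤ s i) (hsum : Summable fun i => s i ^ 2)
    (hsub : ∀ i, (Rect.sq (pos i) (s i)).Sub (Rect.sq c (Real.sqrt (∑' i, s i ^ 2))))
    (hap : ∀ i j, i ≠ j → (Rect.sq (pos i) (s i)).Apart (Rect.sq (pos j) (s j))) :
    PerfectlyPacked (fun i => square (pos i) (s i)) (square c (Real.sqrt (∑' i, s i ^ 2))) := by
  have hin : ∀ i, square (pos i) (s i) ⊆ square c (Real.sqrt (∑' i, s i ^ 2)) := fun i =>
    Set.prod_mono (Set.Icc_subset_Icc (hsub i).1 (hsub i).2.1)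
      (Set.Icc_subset_Icc (hsub i).2.2.1 (hsub i).2.2.2)
  have hdis : Pairwise fun i j => Disjoint (interior (square (pos i) (s i)))
      (interior (square (pos j) (s j))) := fun i j hij => disjoint_interior_square (hap i j hij)
  refine ⟨hin, hdis, ?_⟩
  have hA : 0 ≤ ∑' i, s i ^ 2 := tsum_nonneg fun i => sq_nonneg _
  have hΩ := volume_square c (Real.sqrt_nonneg (∑' i, s i ^ 2))
  rw [Real.sq_sqrt hA] at hΩ
  have hmeas : MeasurableSet (⋃ i, square (pos i) (s i)) :=
    MeasurableSet.iUnion fun i => measurableSet_Icc.prod measurableSet_Icc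
  have hU : ENNReal.ofReal (∑' i, s i ^ 2) ≤ volume (⋃ i, square (pos i) (s i)) := by
    calc ENNReal.ofReal (∑' i, s i ^ 2) = ∑' i, volume (interior (square (pos i) (s i))) := by
          rw [ENNReal.ofReal_tsum_of_nonneg (fun i => sq_nonneg _) hsum]
          exact tsum_congr fun i => (volume_interior_square _ (hs i)).symm
      _ = volume (⋃ i, interior (square (pos i) (s i))) :=
          (measure_iUnion hdis fun i => isOpen_interior.measurableSet).symm
      _ ≤ _ := measure_mono (Set.iUnion_mono fun i => interior_subset)
  have hsubset := Set.iUnion_subset hin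
  rw [measure_sdiff hsubset hmeas.nullMeasurableSet
    (ne_top_of_le_ne_top (hΩ ▸ ENNReal.ofReal_ne_top) (measure_mono hsubset)), hΩ]
  exact tsub_eq_zero_of_le hU

/-- The bijection `k ↦ k + n` from `ℕ` onto the natural numbers that are at least `n`. -/
def addEquivGe (n : ℕ) : ℕ ≃ {m : ℕ // n ≤ m} where
  toFun k := ⟨k + n, Nat.le_add_left n k⟩
  invFun m := m - n
  left_inv k := Nat.add_sub_cancel k n
  right_inv m := Subtype.ext (Nat.sub_add_cancel m.2)

lemma summable_ge_iff {g : ℕ → ℝ} (n : ℕ) :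
    (Summable fun i : {m : ℕ // n ≤ m} => g i) ↔ Summable g := by
  rw [← summable_nat_add_iff n, ← (addEquivGe n).summable_iff]
  rfl

lemma sum_Ico_add_tsum_ge {g : ℕ → ℝ} (hg : Summable g) {n n' : ℕ} (h : n ≤ n') :
    ∑ i ∈ Finset.Ico n n', g i + ∑' i : {m : ℕ // n' ≤ m}, g i =
      ∑' i : {m : ℕ // n ≤ m}, g i := by
  have key : ∀ k, ∑' i : {m : ℕ // k ≤ m}, g i = ∑' i, g (i + k) := fun k =>
    ((addEquivGe k).tsum_eq fun i : {m : ℕ // k ≤ m} => g i).symm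
  have h1 := hg.sum_add_tsum_nat_add n
  have h2 := hg.sum_add_tsum_nat_add n'
  rw [key, key, Finset.sum_Ico_eq_sub g h]
  linarith

lemma exists_perfectlyPacked {s : ℕ → ℝ} {n₀ M : ℕ} {δ θ : ℝ} (hn₀ : 1 ≤ n₀) (hM : 0 < M)
    (hδ : 0 < δ) (hδ' : δ < 1) (hθ : 50 / M ≤ θ)
    (hs : ∀ i j, n₀ ≤ i → i ≤ j → s j ≤ s i) (hs0 : ∀ i, n₀ ≤ i → 0 < s i)
    (hvar : ∀ k, n₀ ≤ k → ∀ i, k ≤ i → i ≤ k + 9 * M ^ 2 →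
      s k * (1 - 1 / (528 * M ^ 2)) ≤ s i)
    (hcmp : ∀ n, n₀ ≤ n → ∃ N : ℕ, n + 6 * M / s n ≤ N ∧
      ∀ k, n ≤ k → k ≤ N → s n ^ 2 ≤ 3 / 2 * s k ^ 2)
    (hsum : Summable fun i => s i ^ 2)
    (h1 : ∑' i : {m : ℕ // n₀ ≤ m}, s i ^ 2 ≤ 1)
    (hwide : ∀ n, n₀ ≤ n → (M * s n) ^ (1 - δ) *
      (θ * ∑ i ∈ Finset.Icc 1 (n - 1), s i ^ (1 + δ)) < ∑' i : {m : ℕ // n ≤ m}, s i ^ 2)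
    (hstart : (∑' i : {m : ℕ // n₀ ≤ m}, s i ^ 2) ^ ((1 + δ) / 2) ≤
      θ * ∑ i ∈ Finset.Icc 1 (n₀ - 1), s i ^ (1 + δ)) :
    ∃ (c : ℝ × ℝ) (pos : {m : ℕ // n₀ ≤ m} → ℝ × ℝ),
      PerfectlyPacked (fun i : {m : ℕ // n₀ ≤ m} => square (pos i) (s i))
        (square c (Real.sqrt (∑' i : {m : ℕ // n₀ ≤ m}, s i ^ 2))) := by
  set T : ℕ → ℝ := fun n => ∑' i : {m : ℕ // n ≤ m}, s i ^ 2 with hT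
  have hT0 : 0 ≤ T n₀ := tsum_nonneg fun i => sq_nonneg _
  set a := Real.sqrt (T n₀) with ha
  have ha0 : 0 ≤ a := Real.sqrt_nonneg _
  have haa : a * a = T n₀ := Real.mul_self_sqrt hT0
  set Q := Rect.sq 0 a with hQ
  have hQw : Q.width = a := by simp [hQ, Rect.width, Rect.sq]
  have hQh : Q.height = a := by simp [hQ, Rect.height, Rect.sq]
  have hQgood : Rect.Good [Q] := by
    refine ⟨fun R hR => ?_, List.pairwise_singleton _ _⟩
    rw [List.mem_singleton.1 hR]
    simpa [Rect.Valid, hQ, Rect.sq] using ha0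
  have hIcc : ∀ n n', n₀ ≤ n → n ≤ n' → ∑ i ∈ Finset.Icc 1 (n' - 1), s i ^ (1 + δ) =
      ∑ i ∈ Finset.Icc 1 (n - 1), s i ^ (1 + δ) + ∑ i ∈ Finset.Ico n n', s i ^ (1 + δ) := by
    intro n n' hn hnn
    have key : ∀ k, 1 ≤ k → Finset.Icc 1 (k - 1) = Finset.Ico 1 k := fun k hk => by
      ext i
      simp only [Finset.mem_Icc, Finset.mem_Ico]
      omega
    rw [key n (hn₀.trans hn), key n' (hn₀.trans (hn.trans hnn)),
      Finset.sum_Ico_consecutive _ (hn₀.trans hn) hnn]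
  obtain ⟨pos, hp1, hp2⟩ := Rect.exists_positions (s := s) (n₀ := n₀) (L₀ := [Q])
    (fun n L => Rect.totalArea L = T n ∧
      Rect.totalPerim δ L ≤ θ * ∑ i ∈ Finset.Icc 1 (n - 1), s i ^ (1 + δ)) hQgood
    (by
      refine ⟨?_, le_trans (le_of_eq ?_) hstart⟩
      · rw [← haa]
        simp [Rect.totalArea, Rect.area_eq_width_mul_height, hQw, hQh]
      · change _ = T n₀ ^ ((1 + δ) / 2)
        rw [← haa, ← pow_two, ← Real.rpow_natCast, ← Real.rpow_mul ha0]
        simp only [Rect.totalPerim, List.map_cons, List.map_nil, List.sum_cons, List.sum_nil,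
          add_zero, Rect.perim, hQw, hQh]
        nth_rewrite 2 [← Real.rpow_one a]
        rw [← Real.rpow_add' ha0 (by linarith)]
        congr 1
        push_cast
        ring)
    (by
      rintro n L hn hL ⟨hA, hP⟩
      obtain ⟨N, hN, hcmpN⟩ := hcmp n hn
      have hTn : T n ≤ T n₀ := by
        have := sum_Ico_add_tsum_ge hsum hn
        have h0 : 0 ≤ ∑ i ∈ Finset.Ico n₀ n, s i ^ 2 := Finset.sum_nonneg fun i _ => sq_nonneg _
        simp only [hT]
        linarith
      obtain ⟨n', L', e1, e2, e3⟩ := Rect.exists_packs_step hM hδ hδ' hθ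
        (fun i j hi => hs i j (hn.trans hi)) (fun i hi => hs0 i (hn.trans hi))
        (fun k hk => hvar k (hn.trans hk)) hcmpN hN hL (hA ▸ hTn.trans h1)
        (by
          rw [hA]
          refine lt_of_le_of_lt (mul_le_mul_of_nonneg_left hP ?_) (hwide n hn)
          exact Real.rpow_nonneg (mul_nonneg M.cast_nonneg (hs0 n hn).le) _)
      refine ⟨n', L', e1, e2, ?_, ?_⟩
      · have g1 := e2.totalArea_add hL
        have g2 := sum_Ico_add_tsum_ge hsum e1.le
        simp only [hT] at hA ⊢
        linarith
      · rw [hIcc n n' hn e1.le, mul_add]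
        exact e3.trans (add_le_add hP le_rfl))
  refine ⟨0, fun i => pos i, perfectlyPacked_of_apart (fun i => (hs0 i i.2).le)
    ((summable_ge_iff n₀).2 hsum) (fun i => ?_)
    fun i j hij => hp2 i j i.2 j.2 (Subtype.coe_ne_coe.2 hij)⟩
  obtain ⟨R, hR, hsub⟩ := hp1 i i.2
  rwa [List.mem_singleton.1 hR] at hsub

theorem perfect_packing_of_sidelengths_f_pow_neg_t
    (t δ : ℝ) (ht₁ : 1 / 2 < t) (ht₂ : t < 1) (hδ : δ = 1 - t)
    (c₁ c₂ d₁ d₂ clv l K : ℝ)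
    (hc₁ : 0 < c₁) (hc₂ : 0 < c₂) (hd₁ : 0 < d₁) (hd₂ : 0 < d₂)
    (hclv : 0 < clv) (hl : 0 < l) (hK : 0 < K)
    (ν₁ ν₂ lam₁ lam₂ : ℕ → ℝ)
    (hν₁ : ∀ n, 0 < ν₁ n) (hν₂ : ∀ n, 0 < ν₂ n)
    (hlam₁ : ∀ n, 0 < lam₁ n) (hlam₂ : ∀ n, 0 < lam₂ n)
    (ξ₁ ξ₂ η₁ η₂ : ℝ) (hξ₁ : 0 < ξ₁) (hξ₂ : 0 < ξ₂) (hη₁ : 0 < η₁) (hη₂ : 0 < η₂)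
    (M N₀ N₁ : ℕ) (hM : 0 < M) (hN₁ : 0 < N₁) (hN₁N₀ : N₁ < N₀)
    (f : ℝ → ℝ)
    (hf_smooth : ContDiffOn ℝ (⊤ : ℕ∞) f (Set.Ici 1))
    (hf_incr : StrictMonoOn f (Set.Ici 1))
    (hf_pos : ∀ x : ℝ, 1 ≤ x → 0 < f x)
    (hf_sum : Summable fun n : {n : ℕ // N₁ ≤ n} => f ((n : ℕ) : ℝ) ^ (-(2 * t)))
    -- condition (1)
    (cond1 : ∀ n₀ : ℕ, N₀ ≤ n₀ → f (n₀ : ℝ) ≥ K * f ((1 + l) * (n₀ : ℝ)))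
    (cond1' : K ≥ (2 / 3 : ℝ) ^ ((1 : ℝ) / 2))
    -- condition (2)
    (cond2 : ∀ n₁ : ℕ, N₁ ≤ n₁ →
      c₁ * ξ₁ * ν₁ n₁ / f (n₁ : ℝ) ^ (t + δ * t) ≤
          ∑ n ∈ Finset.Icc 1 (n₁ - 1), f (n : ℝ) ^ (-(t + δ * t)) ∧
        ∑ n ∈ Finset.Icc 1 (n₁ - 1), f (n : ℝ) ^ (-(t + δ * t)) ≤
          c₂ * ξ₂ * ν₂ n₁ / f (n₁ : ℝ) ^ (t + δ * t))
    -- condition (3)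
    (cond3 : ∀ n₁ : ℕ, N₁ ≤ n₁ →
      d₁ * η₁ * lam₁ n₁ / f (n₁ : ℝ) ^ (2 * t) ≤
          (∑' n : {n : ℕ // n₁ ≤ n}, f ((n : ℕ) : ℝ) ^ (-(2 * t))) ∧
        (∑' n : {n : ℕ // n₁ ≤ n}, f ((n : ℕ) : ℝ) ^ (-(2 * t))) ≤
          d₂ * η₂ * lam₂ n₁ / f (n₁ : ℝ) ^ (2 * t))
    -- condition (4)
    (cond4 : ∀ n₀ : ℕ, N₀ ≤ n₀ → lam₁ n₀ ≥ clv * ν₂ n₀)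
    -- condition (5)
    (cond5 : ∀ n₀ : ℕ, N₀ ≤ n₀ → lam₂ n₀ ≤ d₂⁻¹ * η₂⁻¹ * f (n₀ : ℝ) ^ (2 * t))
    -- condition (6)
    (cond6 : (M : ℝ) ≥
      max ((4 : ℝ) ^ ((1 : ℝ) / (1 - t)) * (c₂ * ξ₂ / (clv * d₁ * η₁)) ^ (2 / (t * (1 - t))))
        ((50 / K ^ (t * (2 - t))) ^ (2 / (1 - t))))
    -- condition (7)
    (cond7 : ∀ n₀ : ℕ, N₀ ≤ n₀ → ∀ x ∈ Set.Icc (n₀ : ℝ) ((n₀ : ℝ) + 9 * (M : ℝ) ^ 2),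
      derivWithin f (Set.Ici 1) x ≤ (1 / 4752) * ((M : ℝ) ^ 4)⁻¹ * f (n₀ : ℝ))
    -- condition (8)
    (cond8 : ∀ n₀ : ℕ, N₀ ≤ n₀ →
      f ((n₀ : ℝ) + 9 * (M : ℝ) ^ 2) ≤ (264 * (M : ℝ) ^ 2) ^ ((1 : ℝ) / t) * f (n₀ : ℝ))
    -- condition (9)
    (cond9 : ∀ n₀ : ℕ, N₀ ≤ n₀ → 9 * (M : ℝ) * f (n₀ : ℝ) ^ t ≤ l * (n₀ : ℝ))
    -- condition (10)
    (cond10 : ∀ n₀ : ℕ, N₀ ≤ n₀ →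
      ν₁ n₀ * lam₂ n₀ ^ (-(1 + δ) / 2) ≥
        ((d₂ * η₂) ^ ((1 + δ) / 2) / (c₁ * ξ₁)) * (M : ℝ) ^ (1 - δ / 2)) :
    ∀ n₀ : ℕ, N₀ ≤ n₀ →
      ∃ (c : ℝ × ℝ) (pos : {n : ℕ // n₀ ≤ n} → ℝ × ℝ),
        PerfectlyPacked (fun n : {n : ℕ // n₀ ≤ n} => square (pos n) (f ((n : ℕ) : ℝ) ^ (-t)))
          (square c (Real.sqrt (∑' n : {n : ℕ // n₀ ≤ n}, f ((n : ℕ) : ℝ) ^ (-(2 * t))))) := by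
  have hδ0 : 0 < δ := by linarith
  have hδ1 : δ < 1 := by linarith
  have ht0 : 0 < t := by linarith
  have hMR : (1 : ℝ) ≤ M := by exact_mod_cast hM
  have hM0 : (0 : ℝ) < M := by linarith
  have hN₀ : 1 ≤ N₀ := by omega
  have hpos : ∀ i : ℕ, 1 ≤ i → 0 < f i := fun i hi => hf_pos i (by exact_mod_cast hi)
  have hmono := hf_incr.monotoneOn
  have hmonoN : ∀ i j : ℕ, 1 ≤ i → i ≤ j → f i ≤ f j := fun i j hi hij =>
    hmono (by simpa using hi) (by simpa using hi.trans hij) (by exact_mod_cast hij)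
  have hsq : ∀ i : ℕ, 1 ≤ i → (f i ^ (-t)) ^ 2 = f i ^ (-(2 * t)) := fun i hi => by
    rw [← Real.rpow_natCast, ← Real.rpow_mul (hpos i hi).le]
    congr 1
    push_cast
    ring
  have hpw : ∀ i : ℕ, 1 ≤ i → (f i ^ (-t)) ^ (1 + δ) = f i ^ (-(t + δ * t)) := fun i hi => by
    rw [← Real.rpow_mul (hpos i hi).le]
    congr 1
    ring
  have hs0 : ∀ i : ℕ, 1 ≤ i → 0 < f i ^ (-t) := fun i hi => Real.rpow_pos_of_pos (hpos i hi) _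
  have hsum : Summable fun i : ℕ => (f i ^ (-t)) ^ 2 :=
    (summable_ge_iff N₁).1 (hf_sum.congr fun i => (hsq i (by have := i.2; omega)).symm)
  have htail : ∀ n : ℕ, 1 ≤ n → ∑' i : {m : ℕ // n ≤ m}, (f ((i : ℕ) : ℝ) ^ (-t)) ^ 2 =
      ∑' i : {m : ℕ // n ≤ m}, f ((i : ℕ) : ℝ) ^ (-(2 * t)) := fun n hn =>
    tsum_congr fun i => hsq i (hn.trans i.2)
  have hpart : ∀ n : ℕ, ∑ i ∈ Finset.Icc 1 (n - 1), (f (i : ℝ) ^ (-t)) ^ (1 + δ) =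
      ∑ i ∈ Finset.Icc 1 (n - 1), f (i : ℝ) ^ (-(t + δ * t)) := fun n =>
    Finset.sum_congr rfl fun i hi => hpw i (Finset.mem_Icc.1 hi).1
  have hle1 : ∀ n : ℕ, N₀ ≤ n →
      ∑' i : {m : ℕ // n ≤ m}, (f ((i : ℕ) : ℝ) ^ (-t)) ^ 2 ≤ 1 := fun n hn => by
    rw [htail n (hN₀.trans hn)]
    refine (cond3 n (hN₁N₀.le.trans hn)).2.trans ?_
    rw [div_le_one (Real.rpow_pos_of_pos (hpos n (hN₀.trans hn)) _)]
    calc d₂ * η₂ * lam₂ n ≤ d₂ * η₂ * (d₂⁻¹ * η₂⁻¹ * f (n : ℝ) ^ (2 * t)) :=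
          mul_le_mul_of_nonneg_left (cond5 n hn) (by positivity)
      _ = f (n : ℝ) ^ (2 * t) := by field_simp
  have hs1 : ∀ n : ℕ, N₀ ≤ n → f n ^ (-t) ≤ 1 := fun n hn => by
    have h1 : (f n ^ (-t)) ^ 2 ≤ 1 := by
      refine le_trans ?_ (hle1 n hn)
      exact ((summable_ge_iff (g := fun i : ℕ => (f i ^ (-t)) ^ 2) n).2 hsum).le_tsum ⟨n, le_rfl⟩
        fun _ _ => sq_nonneg _
    exact (sq_le_one_iff₀ (hs0 n (hN₀.trans hn)).le).1 h1
  have hK1 : K ≤ 1 := by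
    have hx : (1 : ℝ) ≤ N₀ := by exact_mod_cast hN₀
    have h1 : f N₀ < f ((1 + l) * N₀) :=
      hf_incr (mem_Ici.2 hx) (mem_Ici.2 (by nlinarith)) (by nlinarith)
    have h2 := cond1 N₀ le_rfl
    have h3 := hpos N₀ hN₀
    by_contra! h
    nlinarith
  have hK2 : 2 / 3 ≤ K ^ 2 := by
    have h := pow_le_pow_left₀ (by positivity) cond1' 2
    rwa [← Real.rpow_natCast, ← Real.rpow_mul (by norm_num), Nat.cast_ofNat,
      one_div_mul_cancel (by norm_num), Real.rpow_one] at h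
  have hM50 : 50 ≤ (M : ℝ) ^ (δ / 2) := by
    have h1 : (50 : ℝ) ≤ 50 / K ^ (t * (2 - t)) := by
      rw [le_div_iff₀ (Real.rpow_pos_of_pos hK _)]
      have : K ^ (t * (2 - t)) ≤ 1 :=
        Real.rpow_le_one hK.le hK1 (mul_nonneg ht0.le (by linarith))
      linarith
    calc (50 : ℝ) = (50 ^ (2 / (1 - t))) ^ (δ / 2) := by
          rw [← Real.rpow_mul (by norm_num), hδ, div_mul_div_cancel₀ (by linarith), div_self
            (by norm_num), Real.rpow_one]
      _ ≤ (M : ℝ) ^ (δ / 2) := by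
          refine Real.rpow_le_rpow (by positivity) ?_ (by positivity)
          refine le_trans ?_ ((le_max_right _ _).trans cond6)
          exact Real.rpow_le_rpow (by norm_num) h1 (div_nonneg (by norm_num) (by linarith))
  have hMB : c₂ * ξ₂ / (clv * d₁ * η₁) < (M : ℝ) ^ (δ / 2) := by
    set B := c₂ * ξ₂ / (clv * d₁ * η₁) with hB
    have hB0 : 0 < B := by positivity
    rcases le_or_gt 1 B with h | h
    · have h1t : 0 < 1 - t := by linarith
      calc B = B ^ (1 : ℝ) := (Real.rpow_one _).symm
        _ ≤ B ^ (1 / t) := Real.rpow_le_rpow_of_exponent_le h (by rw [le_div_iff₀ ht0]; linarith)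
        _ < 2 * B ^ (1 / t) := by have := Real.rpow_pos_of_pos hB0 (1 / t); linarith
        _ = ((4 : ℝ) ^ ((1 : ℝ) / (1 - t)) * B ^ (2 / (t * (1 - t)))) ^ (δ / 2) := by
            rw [Real.mul_rpow (by positivity) (by positivity), ← Real.rpow_mul (by norm_num),
              ← Real.rpow_mul hB0.le, hδ]
            congr 1
            · rw [show 1 / (1 - t) * ((1 - t) / 2) = 1 / 2 by field_simp,
                show (4 : ℝ) = 2 ^ (2 : ℝ) by norm_num, ← Real.rpow_mul (by norm_num)]
              norm_num
            · congr 1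
              field_simp
        _ ≤ (M : ℝ) ^ (δ / 2) :=
            Real.rpow_le_rpow (by positivity) ((le_max_left _ _).trans cond6) (by positivity)
    · linarith
  intro n₀ hn₀
  have hn₀1 : 1 ≤ n₀ := hN₀.trans hn₀
  rw [← htail n₀ hn₀1]
  refine exists_perfectlyPacked (s := fun i : ℕ => f i ^ (-t)) (θ := (M : ℝ) ^ (-1 + δ / 2)) hn₀1
    hM hδ0 hδ1 ?_ (fun i j hi hij => ?_) (fun i hi => hs0 i (hn₀1.trans hi))
    (fun k hk i hki hi => ?_) (fun n hn => ?_) hsum (hle1 n₀ hn₀) (fun n hn => ?_) ?_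
  · rw [Real.rpow_add hM0, Real.rpow_neg_one, div_eq_inv_mul]
    gcongr
  · exact Real.rpow_le_rpow_of_nonpos (hpos i (hn₀1.trans hi))
      (hmonoN i j (hn₀1.trans hi) hij) (by linarith)
  · have hk1 : (1 : ℝ) ≤ k := by exact_mod_cast hn₀1.trans hk
    have hfk := hpos k (hn₀1.trans hk)
    have hfi := hpos i (hn₀1.trans (hk.trans hki))
    have hki' : (k : ℝ) ≤ i := by exact_mod_cast hki
    have hi' : (i : ℝ) ≤ k + 9 * M ^ 2 := by exact_mod_cast hi
    have hIci : Icc (k : ℝ) (k + 9 * M ^ 2) ⊆ Ici 1 := fun x hx => hk1.trans hx.1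
    have hdiff := hf_smooth.differentiableOn (by simp)
    have hmvt := (convex_Icc (k : ℝ) (k + 9 * M ^ 2)).image_sub_le_mul_sub_of_deriv_le
      (hf_smooth.continuousOn.mono hIci)
      (hdiff.mono (interior_subset.trans hIci)) (C := 1 / 4752 * ((M : ℝ) ^ 4)⁻¹ * f k)
      (fun x hx => by
        rw [interior_Icc] at hx
        rw [← derivWithin_of_mem_nhds (Ici_mem_nhds (hk1.trans_lt hx.1))]
        exact cond7 k (hn₀.trans hk) x ⟨hx.1.le, hx.2.le⟩)
      k ⟨le_rfl, by linarith [sq_nonneg (M : ℝ)]⟩ i ⟨hki', hi'⟩ hki'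
    set ε : ℝ := 1 / (528 * M ^ 2) with hε
    have hε0 : 0 < ε := by positivity
    have hfi' : f i ≤ f k * (1 + ε) := by
      have h1 : 1 / 4752 * ((M : ℝ) ^ 4)⁻¹ * f k * (i - k) ≤
          1 / 4752 * ((M : ℝ) ^ 4)⁻¹ * f k * (9 * M ^ 2) :=
        mul_le_mul_of_nonneg_left (by linarith) (by positivity)
      have h2 : 1 / 4752 * ((M : ℝ) ^ 4)⁻¹ * f k * (9 * M ^ 2) = f k * ε := by
        rw [hε]
        field_simp
        norm_num
      linarith
    calc f k ^ (-t) * (1 - ε) ≤ f k ^ (-t) * (1 + ε) ^ (-t) := by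
          refine mul_le_mul_of_nonneg_left ?_ (Real.rpow_nonneg hfk.le _)
          calc 1 - ε ≤ (1 + ε) ^ (-1 : ℝ) := by
                rw [Real.rpow_neg_one, ← one_div, le_div_iff₀ (by linarith)]
                nlinarith
            _ ≤ (1 + ε) ^ (-t) :=
                Real.rpow_le_rpow_of_exponent_le (by linarith) (by linarith)
      _ = (f k * (1 + ε)) ^ (-t) := (Real.mul_rpow hfk.le (by linarith)).symm
      _ ≤ f i ^ (-t) := Real.rpow_le_rpow_of_nonpos hfi hfi' (by linarith)
  · have hn1 : 1 ≤ n := hn₀1.trans hn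
    have hnR : (1 : ℝ) ≤ n := by exact_mod_cast hn1
    have hfn := hpos n hn1
    have hnN := hn₀.trans hn
    refine ⟨⌊(1 + l) * n⌋₊, ?_, fun k hnk hk => ?_⟩
    · have h1 : 6 * (M : ℝ) / f n ^ (-t) = 6 * (M * f n ^ t) := by
        rw [Real.rpow_neg hfn.le, div_inv_eq_mul, mul_assoc]
      have h2 : 1 ≤ f n ^ t := by
        have := hs1 n hnN
        rwa [Real.rpow_neg hfn.le, inv_le_one₀ (Real.rpow_pos_of_pos hfn _)] at this
      have h3 := cond9 n hnN
      have h4 := Nat.lt_floor_add_one ((1 + l) * n)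
      have h5 : 1 ≤ M * f n ^ t := one_le_mul_of_one_le_of_one_le hMR h2
      rw [h1]
      linarith
    · have hk' : (k : ℝ) ≤ (1 + l) * n := (Nat.le_floor_iff (by positivity)).1 hk
      have hk1 : (1 : ℝ) ≤ k := by exact_mod_cast hn1.trans hnk
      have hfk := hf_pos k hk1
      have h1 : K * f k ≤ f n := by
        refine le_trans (mul_le_mul_of_nonneg_left ?_ hK.le) (cond1 n hnN)
        exact hmono (mem_Ici.2 hk1) (mem_Ici.2 (hk1.trans hk')) hk'
      have h2 : f n ^ (-t) ≤ K⁻¹ * f k ^ (-t) :=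
        calc f n ^ (-t) ≤ (K * f k) ^ (-t) :=
              Real.rpow_le_rpow_of_nonpos (mul_pos hK hfk) h1 (by linarith)
          _ = K ^ (-t) * f k ^ (-t) := Real.mul_rpow hK.le hfk.le
          _ ≤ K ^ (-1 : ℝ) * f k ^ (-t) := by
              refine mul_le_mul_of_nonneg_right ?_ (Real.rpow_nonneg hfk.le _)
              exact Real.rpow_le_rpow_of_exponent_ge hK hK1 (by linarith)
          _ = _ := by rw [Real.rpow_neg_one]
      calc (f n ^ (-t)) ^ 2 ≤ (K⁻¹ * f k ^ (-t)) ^ 2 :=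
            pow_le_pow_left₀ (hs0 n hn1).le h2 2
        _ = (K ^ 2)⁻¹ * (f k ^ (-t)) ^ 2 := by rw [mul_pow, inv_pow]
        _ ≤ 3 / 2 * (f k ^ (-t)) ^ 2 := by
            refine mul_le_mul_of_nonneg_right ?_ (sq_nonneg _)
            rw [inv_le_comm₀ (by positivity) (by norm_num)]
            linarith
  · have hn1 : 1 ≤ n := hn₀1.trans hn
    have hnN := hn₀.trans hn
    have hfn := hpos n hn1
    have hsn := hs0 n hn1
    rw [htail n hn1, hpart n]
    have hA := (cond2 n (hN₁N₀.le.trans hnN)).2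
    have hB := (cond3 n (hN₁N₀.le.trans hnN)).1
    have hMpos : 0 < (M : ℝ) ^ (δ / 2) := Real.rpow_pos_of_pos hM0 _
    have hbal : c₂ * ξ₂ / (M : ℝ) ^ (δ / 2) < d₁ * η₁ * clv := by
      rw [div_lt_iff₀ (by positivity)] at hMB ⊢
      linarith
    have hpows : (M * f n ^ (-t)) ^ (1 - δ) *
        ((M : ℝ) ^ (-1 + δ / 2) * (c₂ * ξ₂ * ν₂ n / f n ^ (t + δ * t))) =
        c₂ * ξ₂ / (M : ℝ) ^ (δ / 2) * (ν₂ n / f n ^ (2 * t)) := by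
      have h1 : (M : ℝ) ^ (1 - δ) * (M : ℝ) ^ (-1 + δ / 2) = ((M : ℝ) ^ (δ / 2))⁻¹ := by
        rw [← Real.rpow_add hM0, ← Real.rpow_neg hM0.le]
        congr 1
        ring
      have h2 : (f n ^ (-t)) ^ (1 - δ) * (f n ^ (t + δ * t))⁻¹ = (f n ^ (2 * t))⁻¹ := by
        rw [← Real.rpow_mul hfn.le, ← Real.rpow_neg hfn.le, ← Real.rpow_neg hfn.le,
          ← Real.rpow_add hfn]
        congr 1
        ring
      rw [Real.mul_rpow hM0.le hsn.le]
      linear_combination (c₂ * ξ₂ * ν₂ n) * ((M : ℝ) ^ (1 - δ) * (M : ℝ) ^ (-1 + δ / 2)) * h2 +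
        (c₂ * ξ₂ * ν₂ n) * (f n ^ (2 * t))⁻¹ * h1
    have hfp : 0 < f n ^ (2 * t) := Real.rpow_pos_of_pos hfn _
    have hν := div_pos (hν₂ n) hfp
    calc (M * f n ^ (-t)) ^ (1 - δ) *
          ((M : ℝ) ^ (-1 + δ / 2) * ∑ i ∈ Finset.Icc 1 (n - 1), f (i : ℝ) ^ (-(t + δ * t)))
        ≤ _ := mul_le_mul_of_nonneg_left (mul_le_mul_of_nonneg_left hA (by positivity))
          (by positivity)
      _ = c₂ * ξ₂ / (M : ℝ) ^ (δ / 2) * (ν₂ n / f n ^ (2 * t)) := hpows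
      _ < d₁ * η₁ * clv * (ν₂ n / f n ^ (2 * t)) := mul_lt_mul_of_pos_right hbal hν
      _ = d₁ * η₁ * (clv * ν₂ n) / f n ^ (2 * t) := by ring
      _ ≤ d₁ * η₁ * lam₁ n / f n ^ (2 * t) := by
          have := cond4 n hnN
          gcongr
      _ ≤ _ := hB
  · have hfn := hpos n₀ hn₀1
    rw [htail n₀ hn₀1, hpart n₀]
    have hA := (cond2 n₀ (hN₁N₀.le.trans hn₀)).1
    have hB := (cond3 n₀ (hN₁N₀.le.trans hn₀)).2
    have hC := cond10 n₀ hn₀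
    have hT0 : 0 ≤ ∑' i : {m : ℕ // n₀ ≤ m}, f ((i : ℕ) : ℝ) ^ (-(2 * t)) :=
      tsum_nonneg fun i => Real.rpow_nonneg (hpos i (hn₀1.trans i.2)).le _
    have hlam := hlam₂ n₀
    have hfp : 0 < f n₀ ^ (2 * t) := Real.rpow_pos_of_pos hfn _
    have hP : 0 < lam₂ n₀ ^ ((1 + δ) / 2) := Real.rpow_pos_of_pos hlam _
    have hQ : 0 < (M : ℝ) ^ (1 - δ / 2) := Real.rpow_pos_of_pos hM0 _
    have hD : 0 < (d₂ * η₂) ^ ((1 + δ) / 2) := Real.rpow_pos_of_pos (by positivity) _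
    have hE : (f n₀ ^ (2 * t)) ^ ((1 + δ) / 2) = f n₀ ^ (t + δ * t) := by
      rw [← Real.rpow_mul hfn.le]
      congr 1
      ring
    have hmain : (d₂ * η₂) ^ ((1 + δ) / 2) * lam₂ n₀ ^ ((1 + δ) / 2) ≤
        (M : ℝ) ^ (-1 + δ / 2) * (c₁ * ξ₁ * ν₁ n₀) := by
      rw [neg_div, Real.rpow_neg hlam.le, ge_iff_le, div_mul_eq_mul_div,
        ← div_eq_mul_inv, div_le_div_iff₀ (by positivity) hP] at hC
      rw [show -1 + δ / 2 = -(1 - δ / 2) by ring, Real.rpow_neg hM0.le, inv_mul_eq_div,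
        le_div_iff₀ hQ]
      linarith
    calc _ ≤ (d₂ * η₂ * lam₂ n₀ / f n₀ ^ (2 * t)) ^ ((1 + δ) / 2) :=
          Real.rpow_le_rpow hT0 hB (by linarith)
      _ = (d₂ * η₂) ^ ((1 + δ) / 2) * lam₂ n₀ ^ ((1 + δ) / 2) / f n₀ ^ (t + δ * t) := by
          rw [Real.div_rpow (by positivity) hfp.le, Real.mul_rpow (by positivity) hlam.le, hE]
      _ ≤ (M : ℝ) ^ (-1 + δ / 2) * (c₁ * ξ₁ * ν₁ n₀) / f n₀ ^ (t + δ * t) := by gcongr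
      _ = (M : ℝ) ^ (-1 + δ / 2) * (c₁ * ξ₁ * ν₁ n₀ / f n₀ ^ (t + δ * t)) := mul_div_assoc _ _ _
      _ ≤ _ := mul_le_mul_of_nonneg_left hA (by positivity)
end

section
/- Let 1/2 < t < 1, let M be a positive integer, let f : ℝ_{≥1} → ℝ_{>0} be a smooth increasing function, and let n₀ be a positive integer such that max_{x∈[n₀, n₀+9M²]} f'(x) ≤ (1/4752)·M^{-4}·f(n₀) and f(n₀+9M²) ≤ (264M²)^{1/t}·f(n₀). Let R be a rectangle with M·f(n₀)^{-t} ≤ w(R) ≤ h(R) ≤ 3M·f(n₀)^{-t}. Then there exists a positive integer n₀' with M² ≤ n₀' - n₀ ≤ 9M² such that R is perfectly packed by squares of sidelength f(n)^{-t} for n₀ ≤ n < n₀' together with a finite family ℛ of rectangles with pairwise disjoint interiors, where the width of each rectangle in ℛ is at most 2·f(n₀)^{-t} and the unweighted total perimeter satisfies perim(ℛ) ≤ 25·M·f(n₀)^{-t}. -/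
open Set MeasureTheory

/-- The axis-parallel rectangle with lower-left corner `c`, horizontal sidelength `a`
and vertical sidelength `b`. -/
noncomputable def rectangle (c : ℝ × ℝ) (a b : ℝ) : Set (ℝ × ℝ) :=
  Set.Icc c.1 (c.1 + a) ×ˢ Set.Icc c.2 (c.2 + b)


/-- The half-open axis-parallel box with lower-left corner `lo` and upper-right corner `hi`. -/
def halfOpenBox (lo hi : ℝ × ℝ) : Set (ℝ × ℝ) :=
  Ico lo.1 hi.1 ×ˢ Ico lo.2 hi.2

/-- The indicator function of `[a, ∞)`. -/
noncomputable def unitStep (a x : ℝ) : ℤ := if a ≤ x then 1 else 0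

lemma indicator_halfOpenBox {lo hi : ℝ × ℝ} (h : lo ≤ hi) (z : ℝ × ℝ) :
    (halfOpenBox lo hi).indicator (1 : ℝ × ℝ → ℤ) z =
      (unitStep lo.1 z.1 - unitStep hi.1 z.1) * (unitStep lo.2 z.2 - unitStep hi.2 z.2) := by
  have aux : ∀ a b x : ℝ, a ≤ b →
      unitStep a x - unitStep b x = if x ∈ Ico a b then 1 else 0 := by
    intro a b x hab
    unfold unitStep
    by_cases h₁ : a ≤ x <;> by_cases h₂ : b ≤ x <;> simp [h₁, h₂]
    linarith
  rw [aux _ _ _ h.1, aux _ _ _ h.2]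
  by_cases h₁ : z.1 ∈ Ico lo.1 hi.1 <;> by_cases h₂ : z.2 ∈ Ico lo.2 hi.2 <;>
    simp only [indicator, halfOpenBox, mem_prod, h₁, h₂] <;> simp

lemma interior_Icc_subset_halfOpenBox (lo hi : ℝ × ℝ) :
    interior (Icc lo hi) ⊆ halfOpenBox lo hi := by
  rw [Icc_prod_eq, interior_prod_eq, interior_Icc, interior_Icc]
  exact prod_mono Ioo_subset_Ico_self Ioo_subset_Ico_self

lemma halfOpenBox_subset_Icc (lo hi : ℝ × ℝ) : halfOpenBox lo hi ⊆ Icc lo hi := by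
  rw [Icc_prod_eq]
  exact prod_mono Ico_subset_Icc_self Ico_subset_Icc_self

lemma volume_Icc_diff_halfOpenBox (lo hi : ℝ × ℝ) :
    volume (Icc lo hi \ halfOpenBox lo hi) = 0 := by
  have h : Icc lo hi =ᵐ[volume] halfOpenBox lo hi := by
    rw [Icc_prod_eq, Measure.volume_eq_prod]
    exact Measure.set_prod_ae_eq Ico_ae_eq_Icc.symm Ico_ae_eq_Icc.symm
  exact ae_le_set.1 h.le

section Packing

variable {κ : Type*} [Fintype κ] {lo hi : κ → ℝ × ℝ} {L U : ℝ × ℝ}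

lemma pairwise_disjoint_of_sum_indicator_eq_one
    (hsub : ∀ k, L ≤ lo k ∧ hi k ≤ U)
    (hsum : ∀ z ∈ halfOpenBox L U,
      ∑ k, (halfOpenBox (lo k) (hi k)).indicator (1 : ℝ × ℝ → ℤ) z = 1) :
    Pairwise fun k l => Disjoint (interior (Icc (lo k) (hi k))) (interior (Icc (lo l) (hi l))) := by
  classical
  intro k l hkl
  refine Disjoint.mono (interior_Icc_subset_halfOpenBox _ _) (interior_Icc_subset_halfOpenBox _ _) ?_
  rw [Set.disjoint_left]
  intro z hk hl
  have hz : z ∈ halfOpenBox L U :=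
    prod_mono (Ico_subset_Ico (hsub k).1.1 (hsub k).2.1)
      (Ico_subset_Ico (hsub k).1.2 (hsub k).2.2) hk
  have h := hsum z hz
  have hle : ∑ m ∈ {k, l}, (halfOpenBox (lo m) (hi m)).indicator (1 : ℝ × ℝ → ℤ) z ≤
      ∑ m, (halfOpenBox (lo m) (hi m)).indicator (1 : ℝ × ℝ → ℤ) z :=
    Finset.sum_le_sum_of_subset_of_nonneg (Finset.subset_univ _) fun m _ _ =>
      indicator_nonneg (fun _ _ => zero_le_one) z
  rw [h, Finset.sum_pair hkl, indicator_of_mem hk, indicator_of_mem hl] at hle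
  norm_num at hle

lemma volume_diff_iUnion_of_sum_indicator_eq_one
    (hsum : ∀ z ∈ halfOpenBox L U,
      ∑ k, (halfOpenBox (lo k) (hi k)).indicator (1 : ℝ × ℝ → ℤ) z = 1) :
    volume (Icc L U \ ⋃ k, Icc (lo k) (hi k)) = 0 := by
  refine measure_mono_null (sdiff_subset_sdiff_right fun z hz => ?_)
    (volume_Icc_diff_halfOpenBox L U)
  have h : ∃ k ∈ Finset.univ,
      (halfOpenBox (lo k) (hi k)).indicator (1 : ℝ × ℝ → ℤ) z ≠ 0 := by
    apply Finset.exists_ne_zero_of_sum_ne_zero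
    rw [hsum z hz]
    exact one_ne_zero
  obtain ⟨k, -, hk⟩ := h
  exact mem_iUnion.2 ⟨k, halfOpenBox_subset_Icc _ _ (mem_of_indicator_ne_zero hk)⟩

end Packing

lemma abel_summation_gap (A D : ℕ → ℤ) (Q : ℕ) :
    ∑ j ∈ Finset.range (Q + 1), (A j - A Q) * (D j - D (j + 1)) +
      ∑ j ∈ Finset.range Q, (A j - A (j + 1)) * D (j + 1) = (A 0 - A Q) * D 0 := by
  rw [Finset.sum_range_succ, sub_self, zero_mul, add_zero, ← Finset.sum_add_distrib,
    Finset.sum_congr rfl (g := fun j => (A j - A Q) * D j - (A (j + 1) - A Q) * D (j + 1))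
      fun j _ => by ring,
    Finset.sum_range_sub' (fun j => (A j - A Q) * D j)]
  ring

/-- The combinatorial identity behind the decomposition of a rectangle into a slightly sheared
grid of cells, the holes at the vertices of the grid, and the two staircases at its boundary. -/
lemma sheared_grid_identity (A B : ℕ → ℕ → ℤ) (hA : ∀ j, A 0 j = 1) (hB : ∀ i, B i 0 = 1)
    (C : ℤ) (Q P : ℕ) :
    ∑ i ∈ Finset.range (P + 1), ∑ j ∈ Finset.range (Q + 1),
        (A i j - A (i + 1) j) * (B i j - B i (j + 1)) +
      ∑ i ∈ Finset.range P, ∑ j ∈ Finset.range Q,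
        (A (i + 1) j - A (i + 1) (j + 1)) * (B (i + 1) (j + 1) - B i (j + 1)) +
      ∑ j ∈ Finset.range (Q + 1), (A (P + 1) j - A (P + 1) Q) * (B P j - B P (j + 1)) +
      ∑ i ∈ Finset.range (P + 1), (A i Q - A (i + 1) Q) * (B i (Q + 1) - C) =
    (1 - A (P + 1) Q) * (1 - C) := by
  have tele : ∀ i, ∑ j ∈ Finset.range (Q + 1), (B i j - B i (j + 1)) = 1 - B i (Q + 1) := by
    intro i
    rw [Finset.sum_range_sub', hB]
  induction P with
  | zero =>
    simp only [zero_add, Finset.sum_range_one, Finset.range_zero, Finset.sum_empty, add_zero, hA]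
    rw [← Finset.sum_add_distrib, Finset.sum_congr rfl
      (g := fun j => (1 - A 1 Q) * (B 0 j - B 0 (j + 1))) fun j _ => by ring,
      ← Finset.mul_sum, tele]
    ring
  | succ P ih =>
    rw [Finset.sum_range_succ _ (P + 1), Finset.sum_range_succ (fun i => ∑ j ∈ Finset.range Q,
        (A (i + 1) j - A (i + 1) (j + 1)) * (B (i + 1) (j + 1) - B i (j + 1))) P,
      Finset.sum_range_succ (fun i => (A i Q - A (i + 1) Q) * (B i (Q + 1) - C)) (P + 1)]
    have habel := abel_summation_gap (A (P + 1)) (fun j => B (P + 1) j - B P j) Q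
    simp only [hB, sub_self, mul_zero] at habel
    have hcol : ∑ j ∈ Finset.range (Q + 1),
          (A (P + 1) j - A (P + 1 + 1) j) * (B (P + 1) j - B (P + 1) (j + 1)) +
        ∑ j ∈ Finset.range (Q + 1),
          (A (P + 1 + 1) j - A (P + 1 + 1) Q) * (B (P + 1) j - B (P + 1) (j + 1)) -
        ∑ j ∈ Finset.range (Q + 1),
          (A (P + 1) j - A (P + 1) Q) * (B P j - B P (j + 1)) =
        (A (P + 1) Q - A (P + 1 + 1) Q) * (1 - B (P + 1) (Q + 1)) +
        ∑ j ∈ Finset.range (Q + 1), (A (P + 1) j - A (P + 1) Q) *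
          (B (P + 1) j - B P j - (B (P + 1) (j + 1) - B P (j + 1))) := by
      rw [← tele, Finset.mul_sum, ← Finset.sum_add_distrib, ← Finset.sum_sub_distrib,
        ← Finset.sum_add_distrib]
      exact Finset.sum_congr rfl fun j _ => by ring
    linear_combination ih + hcol + habel

/-- Indices for the complement of a sheared grid in a rectangle: the interior holes, the pieces of
the right staircase, the pieces of the top staircase, and the right (`true`) and top (`false`)
strips. -/
abbrev GridGap (P Q : ℕ) : Type := (Fin P × Fin Q) ⊕ Fin (Q + 1) ⊕ Fin (P + 1) ⊕ Bool

section Grid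

variable (P Q : ℕ) (X Y : ℕ → ℕ → ℝ) (L U : ℝ × ℝ)

/-- Lower-left corners of the cells of the sheared grid. -/
def cellLo (c : Fin (P + 1) × Fin (Q + 1)) : ℝ × ℝ := (X c.1 c.2, Y c.1 c.2)

/-- Upper-right corners of the cells of the sheared grid. -/
def cellHi (c : Fin (P + 1) × Fin (Q + 1)) : ℝ × ℝ := (X (c.1 + 1) c.2, Y c.1 (c.2 + 1))

/-- Lower-left corners of the boxes filling the complement of the sheared grid. -/
def gapLo : GridGap P Q → ℝ × ℝ
  | .inl (i, j) => (X (i + 1) j, Y (i + 1) (j + 1))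
  | .inr (.inl j) => (X (P + 1) j, Y P j)
  | .inr (.inr (.inl i)) => (X i Q, Y i (Q + 1))
  | .inr (.inr (.inr true)) => (X (P + 1) Q, L.2)
  | .inr (.inr (.inr false)) => (L.1, Y 0 (Q + 1))

/-- Upper-right corners of the boxes filling the complement of the sheared grid. -/
def gapHi : GridGap P Q → ℝ × ℝ
  | .inl (i, j) => (X (i + 1) (j + 1), Y i (j + 1))
  | .inr (.inl j) => (X (P + 1) Q, Y P (j + 1))
  | .inr (.inr (.inl i)) => (X (i + 1) Q, Y 0 (Q + 1))
  | .inr (.inr (.inr true)) => U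
  | .inr (.inr (.inr false)) => (X (P + 1) Q, U.2)

/-- The coordinates `X`, `Y` describe a sheared grid starting from the lower-left corner `L` and
contained in the rectangle with opposite corners `L` and `U`. -/
structure IsShearedGrid : Prop where
  X_mono_left : ∀ j, Monotone fun i => X i j
  X_mono_right : ∀ i, Monotone (X i)
  Y_anti_left : ∀ j, Antitone fun i => Y i j
  Y_mono_right : ∀ i, Monotone (Y i)
  X_zero : ∀ j, X 0 j = L.1
  Y_zero : ∀ i, Y i 0 = L.2
  X_le : X (P + 1) Q ≤ U.1
  Y_le : Y 0 (Q + 1) ≤ U.2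

variable {P Q X Y L U}

namespace IsShearedGrid

variable (h : IsShearedGrid P Q X Y L U)

include h

lemma le_X (i j : ℕ) : L.1 ≤ X i j := h.X_zero j ▸ h.X_mono_left j (Nat.zero_le i)

lemma le_Y (i j : ℕ) : L.2 ≤ Y i j := h.Y_zero i ▸ h.Y_mono_right i (Nat.zero_le j)

lemma X_le_X {i j : ℕ} (hi : i ≤ P + 1) (hj : j ≤ Q) : X i j ≤ X (P + 1) Q :=
  (h.X_mono_left j hi).trans (h.X_mono_right _ hj)

lemma Y_le_Y {i j : ℕ} (hj : j ≤ Q + 1) : Y i j ≤ Y 0 (Q + 1) :=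
  (h.Y_mono_right i hj).trans (h.Y_anti_left _ (Nat.zero_le i))

lemma cellLo_le_cellHi (c : Fin (P + 1) × Fin (Q + 1)) :
    cellLo P Q X Y c ≤ cellHi P Q X Y c :=
  ⟨h.X_mono_left _ (Nat.le_succ _), h.Y_mono_right _ (Nat.le_succ _)⟩

lemma cell_bounds (c : Fin (P + 1) × Fin (Q + 1)) :
    L ≤ cellLo P Q X Y c ∧ cellHi P Q X Y c ≤ U :=
  ⟨⟨h.le_X _ _, h.le_Y _ _⟩,
    ⟨(h.X_le_X (by omega) (by omega)).trans h.X_le, (h.Y_le_Y (by omega)).trans h.Y_le⟩⟩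

lemma gapLo_le_gapHi (g : GridGap P Q) : gapLo P Q X Y L g ≤ gapHi P Q X Y U g := by
  rcases g with ⟨i, j⟩ | j | i | (_ | _)
  · exact ⟨h.X_mono_right _ (Nat.le_succ _), h.Y_anti_left _ (Nat.le_succ _)⟩
  · exact ⟨h.X_le_X le_rfl (by omega), h.Y_mono_right _ (Nat.le_succ _)⟩
  · exact ⟨h.X_mono_left _ (Nat.le_succ _), h.Y_le_Y le_rfl⟩
  · exact ⟨h.le_X _ _, h.Y_le⟩
  · exact ⟨h.X_le, (h.le_Y 0 (Q + 1)).trans h.Y_le⟩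

lemma gap_bounds (g : GridGap P Q) :
    L ≤ gapLo P Q X Y L g ∧ gapHi P Q X Y U g ≤ U := by
  rcases g with ⟨i, j⟩ | j | i | (_ | _)
  · exact ⟨⟨h.le_X _ _, h.le_Y _ _⟩,
      ⟨(h.X_le_X (by omega) (by omega)).trans h.X_le, (h.Y_le_Y (by omega)).trans h.Y_le⟩⟩
  · exact ⟨⟨h.le_X _ _, h.le_Y _ _⟩, ⟨h.X_le, (h.Y_le_Y (by omega)).trans h.Y_le⟩⟩
  · exact ⟨⟨h.le_X _ _, h.le_Y _ _⟩, ⟨(h.X_le_X (by omega) le_rfl).trans h.X_le, h.Y_le⟩⟩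
  · exact ⟨⟨le_rfl, h.le_Y _ _⟩, ⟨h.X_le, le_rfl⟩⟩
  · exact ⟨⟨h.le_X _ _, le_rfl⟩, le_rfl⟩

lemma sum_indicator (z : ℝ × ℝ) (hz : z ∈ halfOpenBox L U) :
    ∑ c, (halfOpenBox (cellLo P Q X Y c) (cellHi P Q X Y c)).indicator (1 : ℝ × ℝ → ℤ) z +
      ∑ g, (halfOpenBox (gapLo P Q X Y L g) (gapHi P Q X Y U g)).indicator
        (1 : ℝ × ℝ → ℤ) z = 1 := by
  obtain ⟨⟨hx₁, hx₂⟩, hy₁, hy₂⟩ := hz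
  have key := sheared_grid_identity (fun i j => unitStep (X i j) z.1)
    (fun i j => unitStep (Y i j) z.2) (fun j => by simp [unitStep, h.X_zero, hx₁])
    (fun i => by simp [unitStep, h.Y_zero, hy₁]) (unitStep (Y 0 (Q + 1)) z.2) Q P
  have hL₁ : unitStep L.1 z.1 = 1 := if_pos hx₁
  have hL₂ : unitStep L.2 z.2 = 1 := if_pos hy₁
  have hU₁ : unitStep U.1 z.1 = 0 := if_neg hx₂.not_ge
  have hU₂ : unitStep U.2 z.2 = 0 := if_neg hy₂.not_ge
  have hc := fun c => indicator_halfOpenBox (h.cellLo_le_cellHi c) z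
  have hg := fun g => indicator_halfOpenBox (h.gapLo_le_gapHi g) z
  simp only [hc, hg]
  simp only [Fintype.sum_sum_type, Fintype.sum_prod_type, Fintype.sum_bool, cellLo, cellHi, gapLo, gapHi, hL₁, hL₂, hU₁, hU₂]
  simp only [Finset.sum_range] at key
  linear_combination key

end IsShearedGrid

end Grid

section Squares

/-- Horizontal coordinates of the grid with cell sizes `S`. -/
def gridX (S : ℕ → ℕ → ℝ) (x : ℝ) (i j : ℕ) : ℝ := x + ∑ k ∈ Finset.range i, S k j

/-- Vertical coordinates of the grid with cell sizes `S`. -/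
def gridY (S : ℕ → ℕ → ℝ) (y : ℝ) (i j : ℕ) : ℝ := y + ∑ k ∈ Finset.range j, S i k

variable {S : ℕ → ℕ → ℝ} {P Q : ℕ} {L U : ℝ × ℝ} {s d : ℝ}

lemma isShearedGrid_of_monotone (h₀ : ∀ i j, 0 ≤ S i j) (hi : ∀ j, Antitone fun i => S i j)
    (hj : ∀ i, Monotone (S i)) (hX : gridX S L.1 (P + 1) Q ≤ U.1)
    (hY : gridY S L.2 0 (Q + 1) ≤ U.2) :
    IsShearedGrid P Q (gridX S L.1) (gridY S L.2) L U where
  X_mono_left j := monotone_nat_of_le_succ fun n => by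
    have := h₀ n j
    simp only [gridX, Finset.sum_range_succ]
    linarith
  X_mono_right i := fun j₁ j₂ hle =>
    (add_le_add_iff_left _).2 (Finset.sum_le_sum fun k _ => hj k hle)
  Y_anti_left j := fun i₁ i₂ hle =>
    (add_le_add_iff_left _).2 (Finset.sum_le_sum fun k _ => hi k hle)
  Y_mono_right i := monotone_nat_of_le_succ fun n => by
    have := h₀ i n
    simp only [gridY, Finset.sum_range_succ]
    linarith
  X_zero j := by simp [gridX]
  Y_zero i := by simp [gridY]
  X_le := hX
  Y_le := hY

variable (hub : ∀ i j, S i j ≤ s)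

include hub in
lemma gridX_le (x : ℝ) (i j : ℕ) : gridX S x i j ≤ x + i * s := by
  have := Finset.sum_le_card_nsmul (Finset.range i) (fun k => S k j) s fun k _ => hub k j
  simpa [gridX] using this

include hub in
lemma gridY_le (y : ℝ) (i j : ℕ) : gridY S y i j ≤ y + j * s := by
  have := Finset.sum_le_card_nsmul (Finset.range j) (fun k => S i k) s fun k _ => hub i k
  simpa [gridY] using this

variable (hlb : ∀ i ≤ P, ∀ j, s - d ≤ S i j)

include hlb in
lemma le_gridX (x : ℝ) {i : ℕ} (hi : i ≤ P + 1) (j : ℕ) :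
    x + i * (s - d) ≤ gridX S x i j := by
  have := Finset.card_nsmul_le_sum (Finset.range i) (fun k => S k j) (s - d) fun k hk =>
    hlb k (by have := Finset.mem_range.1 hk; omega) j
  simpa [gridX] using this

include hlb in
lemma le_gridY (y : ℝ) {i : ℕ} (hi : i ≤ P) (j : ℕ) :
    y + j * (s - d) ≤ gridY S y i j := by
  have := Finset.card_nsmul_le_sum (Finset.range j) (fun k => S i k) (s - d) fun k _ =>
    hlb i hi k
  simpa [gridY] using this

lemma cell_fst_sub (c : Fin (P + 1) × Fin (Q + 1)) (x y : ℝ) :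
    (cellHi P Q (gridX S x) (gridY S y) c).1 =
      (cellLo P Q (gridX S x) (gridY S y) c).1 + S c.1 c.2 := by
  simp only [cellHi, cellLo, gridX, Finset.sum_range_succ]
  ring

lemma cell_snd_sub (c : Fin (P + 1) × Fin (Q + 1)) (x y : ℝ) :
    (cellHi P Q (gridX S x) (gridY S y) c).2 =
      (cellLo P Q (gridX S x) (gridY S y) c).2 + S c.1 c.2 := by
  simp only [cellHi, cellLo, gridY, Finset.sum_range_succ]
  ring

/-- Half of the total perimeter of the boxes filling the complement of the grid. -/
lemma sum_gap_sides_le {u v : ℝ} (hd : 0 ≤ d) (hub : ∀ i j, S i j ≤ s)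
    (hlb : ∀ i ≤ P, ∀ j, s - d ≤ S i j) (hU₁ : U.1 = L.1 + u) (hU₂ : U.2 = L.2 + v) :
    ∑ g, ((gapHi P Q (gridX S L.1) (gridY S L.2) U g).1 -
          (gapLo P Q (gridX S L.1) (gridY S L.2) L g).1 +
        ((gapHi P Q (gridX S L.1) (gridY S L.2) U g).2 -
          (gapLo P Q (gridX S L.1) (gridY S L.2) L g).2)) ≤
      (P + 1) * (Q + 1) * (P + Q + 4) * d + (P + 1) * s + u + 2 * v + (Q + 1) * d := by
  simp only [Fintype.sum_sum_type, Fintype.sum_bool, gapHi, gapLo]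
  have h₁ : ∑ c : Fin P × Fin Q,
      (gridX S L.1 (c.1 + 1) (c.2 + 1) - gridX S L.1 (c.1 + 1) c.2 +
        (gridY S L.2 c.1 (c.2 + 1) - gridY S L.2 (c.1 + 1) (c.2 + 1))) ≤
      ∑ _c : Fin P × Fin Q, ((P + 1) * d + (Q + 1) * d) := by
    refine Finset.sum_le_sum fun c _ => ?_
    have e₁ := gridX_le hub L.1 (c.1 + 1) (c.2 + 1)
    have e₂ := le_gridX hlb L.1 (i := c.1 + 1) (by omega) c.2
    have e₃ := gridY_le hub L.2 c.1 (c.2 + 1)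
    have e₄ := le_gridY hlb L.2 (i := c.1 + 1) (by omega) (c.2 + 1)
    have e₅ : ((c.1 : ℕ) : ℝ) * d ≤ P * d := by gcongr; exact c.1.2.le
    have e₆ : ((c.2 : ℕ) : ℝ) * d ≤ Q * d := by gcongr; exact c.2.2.le
    push_cast at e₁ e₂ e₃ e₄
    linarith
  have h₂ : ∑ j : Fin (Q + 1), (gridX S L.1 (P + 1) Q - gridX S L.1 (P + 1) j +
        (gridY S L.2 P (j + 1) - gridY S L.2 P j)) ≤
      ∑ _j : Fin (Q + 1), ((P + 1) * d + s) := by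
    refine Finset.sum_le_sum fun j _ => ?_
    have e₁ := gridX_le hub L.1 (P + 1) Q
    have e₂ := le_gridX hlb L.1 (i := P + 1) le_rfl j
    have e₃ := hub P j
    have e₄ : gridY S L.2 P (j + 1) = gridY S L.2 P j + S P j := by
      simp only [gridY, Finset.sum_range_succ]; ring
    push_cast at e₁ e₂
    linarith
  have h₃ : ∑ i : Fin (P + 1), (gridX S L.1 (i + 1) Q - gridX S L.1 i Q +
        (gridY S L.2 0 (Q + 1) - gridY S L.2 i (Q + 1))) ≤
      ∑ _i : Fin (P + 1), (s + (Q + 1) * d) := by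
    refine Finset.sum_le_sum fun i _ => ?_
    have e₁ := gridY_le hub L.2 0 (Q + 1)
    have e₂ := le_gridY hlb L.2 (i := i) (by omega) (Q + 1)
    have e₃ := hub i Q
    have e₄ : gridX S L.1 (i + 1) Q = gridX S L.1 i Q + S i Q := by
      simp only [gridX, Finset.sum_range_succ]; ring
    push_cast at e₁ e₂
    linarith
  have h₄ := le_gridY hlb L.2 (i := 0) (Nat.zero_le _) (Q + 1)
  have h₅ : (0 : ℝ) ≤ (P : ℝ) * d ∧ (0 : ℝ) ≤ (Q : ℝ) * d ∧ (0 : ℝ) ≤ (P : ℝ) * Q * d :=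
    ⟨by positivity, by positivity, by positivity⟩
  have h₆ : (0 : ℝ) ≤ (P : ℝ) ^ 2 * d ∧ (0 : ℝ) ≤ (Q : ℝ) ^ 2 * d := ⟨by positivity, by positivity⟩
  simp only [Finset.sum_const, Finset.card_univ, Fintype.card_prod, Fintype.card_fin,
    nsmul_eq_mul] at h₁ h₂ h₃
  push_cast at h₁ h₂ h₃ h₄
  linarith

/-- Every box filling the complement of the grid is thin. -/
lemma min_gap_sides_le {u v : ℝ} (hd : 0 ≤ d) (hub : ∀ i j, S i j ≤ s)
    (hlb : ∀ i ≤ P, ∀ j, s - d ≤ S i j) (hU₁ : U.1 = L.1 + u) (hU₂ : U.2 = L.2 + v)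
    (hu : u ≤ (P + 2) * s) (hv : v ≤ (Q + 2) * s) (hPd : (P + 1) * d ≤ s)
    (hQd : (Q + 1) * d ≤ s) (g : GridGap P Q) :
    min ((gapHi P Q (gridX S L.1) (gridY S L.2) U g).1 -
          (gapLo P Q (gridX S L.1) (gridY S L.2) L g).1)
        ((gapHi P Q (gridX S L.1) (gridY S L.2) U g).2 -
          (gapLo P Q (gridX S L.1) (gridY S L.2) L g).2) ≤ 2 * s := by
  have hs : 0 ≤ s := le_trans (by positivity) hPd
  rcases g with ⟨i, j⟩ | j | i | (_ | _) <;> simp only [gapHi, gapLo]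
  · refine (min_le_left _ _).trans ?_
    have e₁ := gridX_le hub L.1 (i + 1) (j + 1)
    have e₂ := le_gridX hlb L.1 (i := i + 1) (by omega) j
    have e₃ : ((i : ℕ) : ℝ) * d ≤ P * d := by gcongr; exact i.2.le
    push_cast at e₁ e₂
    linarith
  · refine (min_le_left _ _).trans ?_
    have e₁ := gridX_le hub L.1 (P + 1) Q
    have e₂ := le_gridX hlb L.1 (i := P + 1) le_rfl j
    push_cast at e₁ e₂
    linarith
  · refine (min_le_right _ _).trans ?_
    have e₁ := gridY_le hub L.2 0 (Q + 1)
    have e₂ := le_gridY hlb L.2 (i := i) (by omega) (Q + 1)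
    push_cast at e₁ e₂
    linarith
  · refine (min_le_right _ _).trans ?_
    have e₂ := le_gridY hlb L.2 (i := 0) (Nat.zero_le _) (Q + 1)
    push_cast at e₂
    linarith
  · refine (min_le_left _ _).trans ?_
    have e₂ := le_gridX hlb L.1 (i := P + 1) le_rfl Q
    push_cast at e₂
    linarith

end Squares

lemma rectangle_eq_Icc (c : ℝ × ℝ) (a b : ℝ) :
    rectangle c a b = Icc c (c.1 + a, c.2 + b) := by
  rw [Icc_prod_eq]
  rfl

lemma rectangle_sub_eq_Icc (lo hi : ℝ × ℝ) :
    rectangle lo (hi.1 - lo.1) (hi.2 - lo.2) = Icc lo hi := by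
  rw [rectangle_eq_Icc, add_sub_cancel, add_sub_cancel]

/-- A slowly growing function has nearly constant negative powers on a short interval. -/
lemma rpow_neg_near_const {t : ℝ} (ht₀ : 0 ≤ t) (ht₁ : t ≤ 1) {f : ℝ → ℝ} {x₀ : ℝ} (hx₀ : 1 ≤ x₀)
    {ℓ ε C : ℝ} (hf_diff : DifferentiableOn ℝ f (Ici 1)) (hf₀ : 0 < f x₀)
    (hε : 0 ≤ ε) (hC : 0 ≤ C) (hCℓ : C * ℓ ≤ ε * f x₀)
    (hderiv : ∀ x ∈ Icc x₀ (x₀ + ℓ), derivWithin f (Ici 1) x ≤ C)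
    {x : ℝ} (hx : x ∈ Icc x₀ (x₀ + ℓ)) (hfx : 0 < f x) :
    f x₀ ^ (-t) - ε * f x₀ ^ (-t) ≤ f x ^ (-t) := by
  have hsub : Icc x₀ (x₀ + ℓ) ⊆ Ici 1 := fun y hy => hx₀.trans hy.1
  have hgrow : f x - f x₀ ≤ C * (x - x₀) := by
    refine (convex_Icc x₀ (x₀ + ℓ)).image_sub_le_mul_sub_of_deriv_le
      (hf_diff.continuousOn.mono hsub)
      (hf_diff.mono (interior_subset.trans hsub)) (fun y hy => ?_) x₀
      (left_mem_Icc.2 (hx.1.trans hx.2)) x hx hx.1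
    rw [interior_Icc] at hy
    rw [← derivWithin_of_mem_nhds (Ici_mem_nhds (hx₀.trans_lt hy.1))]
    exact hderiv y (Ioo_subset_Icc_self hy)
  have hle : f x ≤ f x₀ * (1 + ε) := by
    have : C * (x - x₀) ≤ C * ℓ := by gcongr; linarith [hx.2]
    linarith
  have hpos : 0 < f x₀ ^ (-t) := Real.rpow_pos_of_pos hf₀ _
  calc f x₀ ^ (-t) - ε * f x₀ ^ (-t) = f x₀ ^ (-t) * (1 - ε) := by ring
    _ ≤ f x₀ ^ (-t) * (1 + ε) ^ (-1 : ℝ) := by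
        gcongr
        rw [Real.rpow_neg_one, ← one_div, le_div_iff₀ (by linarith)]
        nlinarith
    _ ≤ f x₀ ^ (-t) * (1 + ε) ^ (-t) := by
        gcongr
        · linarith
    _ = (f x₀ * (1 + ε)) ^ (-t) := (Real.mul_rpow hf₀.le (by linarith)).symm
    _ ≤ f x ^ (-t) := Real.rpow_le_rpow_of_nonpos hfx hle (by linarith)

lemma exists_grid_size {M : ℕ} (hM : 0 < M) {s a : ℝ} (hs : 0 < s) (h₁ : M * s ≤ a)
    (h₂ : a ≤ 3 * M * s) :
    ∃ P : ℕ, M ≤ P + 1 ∧ P + 1 ≤ 3 * M ∧ (P + 1) * s ≤ a ∧ a ≤ (P + 2) * s := by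
  have hle : M ≤ ⌊a / s⌋₊ := Nat.le_floor ((le_div_iff₀ hs).2 h₁)
  have hge : ⌊a / s⌋₊ ≤ 3 * M := by
    refine Nat.floor_le_of_le ?_
    rw [div_le_iff₀ hs]
    exact_mod_cast h₂
  have ha : 0 ≤ a / s := div_nonneg (le_trans (by positivity) h₁) hs.le
  obtain ⟨P, hP⟩ : ∃ P, ⌊a / s⌋₊ = P + 1 := ⟨⌊a / s⌋₊ - 1, by omega⟩
  refine ⟨P, by omega, by omega, ?_, ?_⟩
  · have := Nat.floor_le ha
    rw [hP, le_div_iff₀ hs] at this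
    exact_mod_cast this
  · have := (Nat.lt_floor_add_one (a / s)).le
    rw [hP, div_le_iff₀ hs] at this
    push_cast at this
    linarith

/-- Decreasing enumeration of the cells of a grid: columns from left to right, and the cells of
each column from top to bottom. -/
lemma exists_cell_enumeration (n₀ P Q : ℕ) :
    ∃ e : {n : ℕ // n₀ ≤ n ∧ n < n₀ + (P + 1) * (Q + 1)} ≃ Fin (P + 1) × Fin (Q + 1),
      ∀ n : {n : ℕ // n₀ ≤ n ∧ n < n₀ + (P + 1) * (Q + 1)}, (n : ℕ) = n₀ + ((Q + 1) * ((e n).1 : ℕ) + (Q - ((e n).2 : ℕ))) := by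
  let e₁ : {n : ℕ // n₀ ≤ n ∧ n < n₀ + (P + 1) * (Q + 1)} ≃ Fin ((P + 1) * (Q + 1)) :=
    { toFun := fun n => ⟨n - n₀, by have := n.2; omega⟩
      invFun := fun k => ⟨n₀ + k, by have := k.2; omega⟩
      left_inv := fun n => by
        have := n.2
        ext
        simp only
        omega
      right_inv := fun k => by simp }
  refine ⟨(e₁.trans finProdFinEquiv.symm).trans (Equiv.prodCongr (Equiv.refl _) Fin.revPerm),
    fun n => ?_⟩
  have hk := finProdFinEquiv.apply_symm_apply (e₁ n)
  have hv := congrArg Fin.val hk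
  have hn : (e₁ n : ℕ) = n - n₀ := rfl
  have := n.2
  simp only [finProdFinEquiv_apply_val, hn] at hv
  simp only [Equiv.trans_apply, Equiv.prodCongr_apply, Prod.map, Equiv.refl_apply,
    Fin.revPerm_apply, Fin.val_rev]
  have := (finProdFinEquiv.symm (e₁ n)).2.2
  omega

theorem efficient_packing_of_small_rectangle
    (t : ℝ) (ht₁ : 1 / 2 < t) (ht₂ : t < 1)
    (M : ℕ) (hM : 0 < M)
    (f : ℝ → ℝ)
    (hf_smooth : ContDiffOn ℝ (⊤ : ℕ∞) f (Set.Ici 1))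
    (hf_incr : StrictMonoOn f (Set.Ici 1))
    (hf_pos : ∀ x : ℝ, 1 ≤ x → 0 < f x)
    (n₀ : ℕ) (hn₀ : 0 < n₀)
    (hderiv : ∀ x ∈ Set.Icc (n₀ : ℝ) ((n₀ : ℝ) + 9 * (M : ℝ) ^ 2),
      derivWithin f (Set.Ici 1) x ≤ (1 / 4752) * ((M : ℝ) ^ 4)⁻¹ * f (n₀ : ℝ))
    (hgrowth : f ((n₀ : ℝ) + 9 * (M : ℝ) ^ 2) ≤ (264 * (M : ℝ) ^ 2) ^ ((1 : ℝ) / t) * f (n₀ : ℝ))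
    -- the rectangle `R = rectangle p a b`, with width `min a b` and height `max a b`
    (p : ℝ × ℝ) (a b : ℝ)
    (hw : (M : ℝ) * f (n₀ : ℝ) ^ (-t) ≤ min a b)
    (hh : max a b ≤ 3 * (M : ℝ) * f (n₀ : ℝ) ^ (-t)) :
    ∃ n₀' : ℕ, n₀ + M ^ 2 ≤ n₀' ∧ n₀' ≤ n₀ + 9 * M ^ 2 ∧
      ∃ (m : ℕ) (rc : Fin m → ℝ × ℝ) (ra rb : Fin m → ℝ)
        (pos : {n : ℕ // n₀ ≤ n ∧ n < n₀'} → ℝ × ℝ),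
        (∀ i, 0 ≤ ra i ∧ 0 ≤ rb i) ∧
        -- all the squares and rectangles are contained in `R`
        (∀ n, square (pos n) (f ((n : ℕ) : ℝ) ^ (-t)) ⊆ rectangle p a b) ∧
        (∀ i, rectangle (rc i) (ra i) (rb i) ⊆ rectangle p a b) ∧
        -- pairwise disjoint interiors
        (Pairwise fun n n' : {n : ℕ // n₀ ≤ n ∧ n < n₀'} =>
          Disjoint (interior (square (pos n) (f ((n : ℕ) : ℝ) ^ (-t))))
            (interior (square (pos n') (f ((n' : ℕ) : ℝ) ^ (-t))))) ∧
        (Pairwise fun i j : Fin m =>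
          Disjoint (interior (rectangle (rc i) (ra i) (rb i)))
            (interior (rectangle (rc j) (ra j) (rb j)))) ∧
        (∀ n i, Disjoint (interior (square (pos n) (f ((n : ℕ) : ℝ) ^ (-t))))
            (interior (rectangle (rc i) (ra i) (rb i)))) ∧
        -- the squares and the rectangles cover `R` up to a null set
        volume (rectangle p a b \
          ((⋃ n, square (pos n) (f ((n : ℕ) : ℝ) ^ (-t))) ∪
            ⋃ i, rectangle (rc i) (ra i) (rb i))) = 0 ∧
        -- each rectangle has width at most `2 f(n₀)^{-t}`
        (∀ i, min (ra i) (rb i) ≤ 2 * f (n₀ : ℝ) ^ (-t)) ∧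
        -- unweighted total perimeter bound
        2 * (∑ i, (ra i + rb i)) ≤ 25 * (M : ℝ) * f (n₀ : ℝ) ^ (-t) := by
  have ht₀ : 0 ≤ t := by linarith
  have hM₁ : (1 : ℝ) ≤ M := by exact_mod_cast hM
  have hn₁ : (1 : ℝ) ≤ n₀ := by exact_mod_cast hn₀
  have hf₀ : 0 < f n₀ := hf_pos _ hn₁
  set s : ℝ := f n₀ ^ (-t) with hs_def
  have hs : 0 < s := Real.rpow_pos_of_pos hf₀ _
  set d : ℝ := 1 / (528 * (M : ℝ) ^ 2) * s with hd_def
  have hd : 0 ≤ d := by positivity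
  have hMMd : (M : ℝ) ^ 2 * d = s / 528 := by rw [hd_def]; field_simp
  obtain ⟨P, hMP, hPM, hPa, haP⟩ := exists_grid_size hM hs (hw.trans (min_le_left a b))
    ((le_max_left a b).trans hh)
  obtain ⟨Q, hMQ, hQM, hQb, hbQ⟩ := exists_grid_size hM hs (hw.trans (min_le_right a b))
    ((le_max_right a b).trans hh)
  have hPM' : (P : ℝ) + 1 ≤ 3 * M := by exact_mod_cast hPM
  have hQM' : (Q : ℝ) + 1 ≤ 3 * M := by exact_mod_cast hQM
  have hcard₁ : M ^ 2 ≤ (P + 1) * (Q + 1) := by rw [sq]; exact Nat.mul_le_mul hMP hMQ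
  have hcard₂ : (P + 1) * (Q + 1) ≤ 9 * M ^ 2 := by
    calc (P + 1) * (Q + 1) ≤ (3 * M) * (3 * M) := Nat.mul_le_mul hPM hQM
      _ = 9 * M ^ 2 := by ring
  have hmem : ∀ k : ℕ, (1 : ℝ) ≤ ((n₀ + k : ℕ) : ℝ) := fun k => by
    push_cast
    have : (0 : ℝ) ≤ k := k.cast_nonneg
    linarith
  let σ : ℕ → ℝ := fun k => f ((n₀ + k : ℕ) : ℝ) ^ (-t)
  have hσ_anti : Antitone σ := fun k l hkl =>
    Real.rpow_le_rpow_of_nonpos (hf_pos _ (hmem k))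
      (hf_incr.monotoneOn (hmem k) (hmem l) (by exact_mod_cast Nat.add_le_add_left hkl n₀))
      (by linarith)
  have hσ_zero : σ 0 = s := by simp [σ, hs_def]
  have hσ_lb : ∀ k, k ≤ 9 * M ^ 2 → s - d ≤ σ k := fun k hk => by
    have hk' : (k : ℝ) ≤ 9 * (M : ℝ) ^ 2 := by exact_mod_cast hk
    refine rpow_neg_near_const (C := 1 / 4752 * ((M : ℝ) ^ 4)⁻¹ * f n₀) ht₀ ht₂.le hn₁
      (hf_smooth.differentiableOn (by simp)) hf₀ (by positivity) (by positivity) (le_of_eq ?_)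
      hderiv ⟨?_, ?_⟩ (hf_pos _ (hmem k))
    · field_simp
      norm_num
    · push_cast
      have : (0 : ℝ) ≤ k := k.cast_nonneg
      linarith
    · push_cast
      linarith
  let S : ℕ → ℕ → ℝ := fun i j => σ ((Q + 1) * i + (Q - j))
  have hS₀ : ∀ i j, 0 ≤ S i j := fun i j => Real.rpow_nonneg (hf_pos _ (hmem _)).le _
  have hS_anti : ∀ j, Antitone fun i => S i j := fun j i₁ i₂ hi =>
    hσ_anti (Nat.add_le_add_right (Nat.mul_le_mul_left _ hi) _)
  have hS_mono : ∀ i, Monotone (S i) := fun i j₁ j₂ hj => hσ_anti (by omega)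
  have hub : ∀ i j, S i j ≤ s := fun i j => hσ_zero ▸ hσ_anti (Nat.zero_le _)
  have hlb : ∀ i ≤ P, ∀ j, s - d ≤ S i j := fun i hi j => by
    refine hσ_lb _ (le_trans ?_ hcard₂)
    have := Nat.mul_le_mul_left (Q + 1) hi
    have : (P + 1) * (Q + 1) = (Q + 1) * P + (Q + 1) := by ring
    omega
  let U : ℝ × ℝ := (p.1 + a, p.2 + b)
  have hgrid : IsShearedGrid P Q (gridX S p.1) (gridY S p.2) p U := by
    refine isShearedGrid_of_monotone hS₀ hS_anti hS_mono ?_ ?_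
    · have := gridX_le hub p.1 (P + 1) Q
      push_cast at this
      exact this.trans (by simp only [U]; linarith)
    · have := gridY_le hub p.2 0 (Q + 1)
      push_cast at this
      exact this.trans (by simp only [U]; linarith)
  obtain ⟨e, he⟩ := exists_cell_enumeration n₀ P Q
  let γ := (Fintype.equivFin (GridGap P Q)).symm
  let cLo := cellLo P Q (gridX S p.1) (gridY S p.2)
  let cHi := cellHi P Q (gridX S p.1) (gridY S p.2)
  let gLo := gapLo P Q (gridX S p.1) (gridY S p.2) p
  let gHi := gapHi P Q (gridX S p.1) (gridY S p.2) U
  have hrect : rectangle p a b = Icc p U := rectangle_eq_Icc p a b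
  have hsq : ∀ n, square (cLo (e n)) (f ((n : ℕ) : ℝ) ^ (-t)) = Icc (cLo (e n)) (cHi (e n)) := by
    intro n
    have hn : f ((n : ℕ) : ℝ) ^ (-t) = S (e n).1 (e n).2 := by simp only [S, σ, ← he n]
    have hHi : cHi (e n) = ((cLo (e n)).1 + S (e n).1 (e n).2,
        (cLo (e n)).2 + S (e n).1 (e n).2) :=
      Prod.ext (cell_fst_sub _ _ _) (cell_snd_sub _ _ _)
    rw [hn, hHi]
    exact rectangle_eq_Icc _ _ _
  let lo : (Fin (P + 1) × Fin (Q + 1)) ⊕ GridGap P Q → ℝ × ℝ := Sum.elim cLo gLo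
  let hi : (Fin (P + 1) × Fin (Q + 1)) ⊕ GridGap P Q → ℝ × ℝ := Sum.elim cHi gHi
  have hsum : ∀ z ∈ halfOpenBox p U,
      ∑ k, (halfOpenBox (lo k) (hi k)).indicator (1 : ℝ × ℝ → ℤ) z = 1 := fun z hz => by
    rw [Fintype.sum_sum_type]
    exact hgrid.sum_indicator z hz
  have hdisj := pairwise_disjoint_of_sum_indicator_eq_one (lo := lo) (hi := hi)
    (Sum.rec hgrid.cell_bounds hgrid.gap_bounds) hsum
  have hcover := volume_diff_iUnion_of_sum_indicator_eq_one hsum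
  have hMd : (M : ℝ) * d ≤ s / 528 := by
    rw [← hMMd]
    gcongr
    exact le_self_pow₀ hM₁ two_ne_zero
  refine ⟨n₀ + (P + 1) * (Q + 1), by omega, by omega, Fintype.card (GridGap P Q),
    fun k => gLo (γ k), fun k => (gHi (γ k)).1 - (gLo (γ k)).1,
    fun k => (gHi (γ k)).2 - (gLo (γ k)).2, fun n => cLo (e n), ?_, ?_, ?_, ?_, ?_, ?_, ?_, ?_, ?_⟩
  · exact fun k => ⟨sub_nonneg.2 (hgrid.gapLo_le_gapHi (γ k)).1,
      sub_nonneg.2 (hgrid.gapLo_le_gapHi (γ k)).2⟩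
  · intro n
    rw [hsq, hrect]
    exact Icc_subset_Icc (hgrid.cell_bounds _).1 (hgrid.cell_bounds _).2
  · intro k
    rw [rectangle_sub_eq_Icc, hrect]
    exact Icc_subset_Icc (hgrid.gap_bounds _).1 (hgrid.gap_bounds _).2
  · intro n n' hne
    rw [hsq, hsq]
    exact hdisj (i := .inl (e n)) (j := .inl (e n')) (by simpa using hne)
  · intro k l hne
    rw [rectangle_sub_eq_Icc, rectangle_sub_eq_Icc]
    exact hdisj (i := .inr (γ k)) (j := .inr (γ l)) (by simpa using hne)
  · intro n k
    rw [hsq, rectangle_sub_eq_Icc]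
    exact hdisj (i := .inl (e n)) (j := .inr (γ k)) (by simp)
  · simp only [hsq, rectangle_sub_eq_Icc, hrect]
    refine measure_mono_null (sdiff_subset_sdiff_right (iUnion_subset ?_)) hcover
    rintro (c | g)
    · refine subset_union_of_subset_left (subset_iUnion_of_subset (e.symm c) ?_) _
      simp [lo, hi]
    · refine subset_union_of_subset_right (subset_iUnion_of_subset (γ.symm g) ?_) _
      simp [lo, hi]
  · refine fun k => min_gap_sides_le hd hub hlb rfl rfl haP hbQ ?_ ?_ (γ k)
    · exact (mul_le_mul_of_nonneg_right hPM' hd).trans (by linarith)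
    · exact (mul_le_mul_of_nonneg_right hQM' hd).trans (by linarith)
  · rw [γ.sum_comp fun g => (gHi g).1 - (gLo g).1 + ((gHi g).2 - (gLo g).2)]
    have htotal : ∑ g, ((gHi g).1 - (gLo g).1 + ((gHi g).2 - (gLo g).2)) ≤ _ :=
      sum_gap_sides_le hd hub hlb rfl rfl
    have hcells : ((P : ℝ) + 1) * (Q + 1) * (P + Q + 4) * d ≤
        (3 * M) * (3 * M) * (8 * M) * d := by
      gcongr
      linarith
    have hM₃ : (3 * (M : ℝ)) * (3 * M) * (8 * M) * d = 72 * M * (s / 528) := by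
      rw [← hMMd]; ring
    have hQd := mul_le_mul_of_nonneg_right hQM' hd
    have hsM : s ≤ M * s := le_mul_of_one_le_left hs.le hM₁
    have ha := (le_max_left a b).trans hh
    have hb := (le_max_right a b).trans hh
    linarith
end
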